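/- Let f : [−π,π] → ℝ be even, bounded, and continuous almost everywhere, with essential range ER(f) equal to the interval [inf_{[0,π]} f, sup_{[0,π]} f]. Then for every n and every asymptotically uniform grid {x_{i,n}}_{i=1,…,n} in [0,π], there exist a real unitary n×n matrix V_n and orderings of the eigenvalues of T_n(f) and H_n(f) such that: Y_n = V_n Δ_n V_nᵀ with Δ_n = diag_{i=1,…,n}((−1)^{i+1}); T_n(f) = V_n D_n V_nᵀ with D_n = diag_{i=1,…,n}(λ_i(T_n(f))); H_n(f) = V_n Δ_n D_n V_nᵀ; λ_i(H_n(f)) = (−1)^{i+1} λ_i(T_n(f)) for i = 1,…,n; and max_{i=1,…,n} |f(x_{i,n}) − λ_i(T_n(f))| → 0 as n → ∞. -/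

import Mathlib

/-!
The alternating diagonal matrix written in the orthonormal basis of the discrete sine transform is
the flip matrix, and the flip matrix commutes with every symmetric Toeplitz matrix. Hence `T_n(f)`
can be diagonalized inside the two eigenspaces of the flip, and within each of them the eigenvalues
may be listed in the order of the samples `f (x i)`.

The matrix with eigenvalues `f (x i)` in the sine basis differs from `T_n(f)` by `o(√n)` in
Frobenius norm: for a cosine polynomial the difference at the nodes `iπ / (n + 1)` is supported on
boundedly many entries near two corners, and approximating `f` in `L²` by cosine polynomials leaves
an error controlled by Parseval's identity on the Toeplitz side and by Riemann sums on the sine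
side. The Hoffman–Wielandt inequality turns this into `∑ (λ_i - f (x i))² = o(n)`.

Suppose some eigenvalue misses its sample by `ε`. All eigenvalues lie in `[inf f, sup f]`, which is
the essential range, so a fixed proportion of the samples of each parity falls in a window between
the sample and the eigenvalue. By monotonicity all the corresponding eigenvalues miss their samples
by at least `ε / 2`, which contradicts the `o(n)` bound.
-/

open MeasureTheory Matrix Filter

/-- The `k`-th Fourier coefficient of `f : ℝ → ℂ` on `[-π, π]`. -/
noncomputable def fourierCoef (f : ℝ → ℂ) (k : ℤ) : ℂ :=
  (1 / (2 * Real.pi)) * ∫ x in (-Real.pi)..Real.pi, f x * Complex.exp (-Complex.I * k * x)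

/-- The `n × n` Toeplitz matrix generated by `f` (real version). -/
noncomputable def toeplitzR (f : ℝ → ℂ) (n : ℕ) : Matrix (Fin n) (Fin n) ℝ :=
  Matrix.of fun i j => (fourierCoef f ((i : ℤ) - (j : ℤ))).re

/-- The `n × n` exchange (flip) matrix `Y_n`. -/
def flipM (n : ℕ) : Matrix (Fin n) (Fin n) ℝ :=
  Matrix.of fun i j => if (i : ℕ) + (j : ℕ) = n - 1 then 1 else 0

/-- Essential range of a real-valued function on a set. -/
def essRangeR (f : ℝ → ℝ) (s : Set ℝ) : Set ℝ :=
  {z : ℝ | ∀ ε > 0, 0 < volume {x ∈ s | |f x - z| < ε}}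

section Frobenius

open scoped Matrix.Norms.Frobenius

variable {ι 𝕜 : Type*} [Fintype ι] [RCLike 𝕜]

lemma frobenius_norm_sq {m n α : Type*} [Fintype m] [Fintype n] [SeminormedAddCommGroup α]
    (A : Matrix m n α) : ‖A‖ ^ 2 = ∑ i, ∑ j, ‖A i j‖ ^ 2 := by
  rw [frobenius_norm_def, ← Real.sqrt_eq_rpow, Real.sq_sqrt (by positivity)]
  simp only [Real.rpow_two]

lemma frobenius_norm_sq_eq_trace (A : Matrix ι ι 𝕜) :
    ((‖A‖ ^ 2 : ℝ) : 𝕜) = trace (A * Aᴴ) := by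
  rw [frobenius_norm_sq]
  simp only [trace, diag_apply, mul_apply, conjTranspose_apply, RCLike.star_def, RCLike.mul_conj,
    RCLike.ofReal_sum, RCLike.ofReal_pow]

variable [DecidableEq ι]

lemma frobenius_norm_mul_unitary (A : Matrix ι ι 𝕜) {U : Matrix ι ι 𝕜}
    (hU : U ∈ unitaryGroup ι 𝕜) : ‖A * U‖ = ‖A‖ := by
  have hsq : ((‖A * U‖ ^ 2 : ℝ) : 𝕜) = ((‖A‖ ^ 2 : ℝ) : 𝕜) := by
    rw [frobenius_norm_sq_eq_trace, frobenius_norm_sq_eq_trace, conjTranspose_mul,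
      Matrix.mul_assoc, ← Matrix.mul_assoc U, ← star_eq_conjTranspose U,
      mem_unitaryGroup_iff.mp hU, Matrix.one_mul]
  exact (sq_eq_sq₀ (norm_nonneg _) (norm_nonneg _)).mp (RCLike.ofReal_inj.mp hsq)

lemma frobenius_norm_unitary_mul (A : Matrix ι ι 𝕜) {U : Matrix ι ι 𝕜}
    (hU : U ∈ unitaryGroup ι 𝕜) : ‖U * A‖ = ‖A‖ := by
  rw [← frobenius_norm_conjTranspose, conjTranspose_mul, ← star_eq_conjTranspose U,
    frobenius_norm_mul_unitary _ (Unitary.star_mem hU), frobenius_norm_conjTranspose]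

lemma frobenius_norm_conj_unitary (A : Matrix ι ι 𝕜) {U : Matrix ι ι 𝕜}
    (hU : U ∈ unitaryGroup ι 𝕜) : ‖U * A * Uᴴ‖ = ‖A‖ := by
  rw [← star_eq_conjTranspose, frobenius_norm_mul_unitary _ (Unitary.star_mem hU),
    frobenius_norm_unitary_mul _ hU]

lemma frobenius_norm_conj_diagonal_sub_diagonal_sq {U : Matrix ι ι 𝕜}
    (hU : U ∈ unitaryGroup ι 𝕜) (d s : ι → ℝ) :
    ‖U * diagonal (fun i => (d i : 𝕜)) * Uᴴ - diagonal (fun i => (s i : 𝕜))‖ ^ 2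
      = ∑ i, ∑ j, ‖U i j‖ ^ 2 * (d j - s i) ^ 2 := by
  have hcancel : (U * diagonal (fun i => (d i : 𝕜)) * Uᴴ - diagonal (fun i => (s i : 𝕜))) * U
      = U * diagonal (fun i => (d i : 𝕜)) - diagonal (fun i => (s i : 𝕜)) * U := by
    rw [Matrix.sub_mul, Matrix.mul_assoc, ← star_eq_conjTranspose, mem_unitaryGroup_iff'.mp hU,
      Matrix.mul_one]
  rw [← frobenius_norm_mul_unitary _ hU, hcancel, frobenius_norm_sq]
  refine Finset.sum_congr rfl fun i _ => Finset.sum_congr rfl fun j _ => ?_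
  rw [Matrix.sub_apply, mul_diagonal, diagonal_mul, mul_comm _ (U i j), ← mul_sub, norm_mul,
    mul_pow, ← RCLike.ofReal_sub, RCLike.norm_ofReal, sq_abs]

end Frobenius

section HoffmanWielandt

variable {ι : Type*} [Fintype ι]

lemma sum_sq_sub_le_sum_sq_comp_perm_sub {d s : ι → ℝ} (h : Monovary d s) (σ : Equiv.Perm ι) :
    ∑ i, (d i - s i) ^ 2 ≤ ∑ i, (d (σ i) - s i) ^ 2 := by
  have expand (τ : Equiv.Perm ι) : ∑ i, (d (τ i) - s i) ^ 2
      = ∑ i, d i ^ 2 - 2 * ∑ i, d (τ i) * s i + ∑ i, s i ^ 2 := by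
    rw [← Equiv.sum_comp τ fun i => d i ^ 2, Finset.mul_sum, ← Finset.sum_sub_distrib,
      ← Finset.sum_add_distrib]
    exact Finset.sum_congr rfl fun i _ => by ring
  have hid := expand (Equiv.refl ι)
  simp only [Equiv.refl_apply] at hid
  rw [hid, expand σ]
  linarith [h.sum_comp_perm_mul_le_sum_mul (σ := σ)]

variable [DecidableEq ι]

lemma sum_sq_sub_le_of_mem_doublyStochastic {P : Matrix ι ι ℝ} (hP : P ∈ doublyStochastic ℝ ι)
    {d s : ι → ℝ} (h : Monovary d s) :
    ∑ i, (d i - s i) ^ 2 ≤ ∑ i, ∑ j, P i j * (d j - s i) ^ 2 := by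
  obtain ⟨w, hw0, hw1, rfl⟩ := exists_eq_sum_perm_of_mem_doublyStochastic hP
  have hperm (σ : Equiv.Perm ι) :
      ∑ i, ∑ j, σ.permMatrix ℝ i j * (d j - s i) ^ 2 = ∑ i, (d (σ i) - s i) ^ 2 := by
    simp [Equiv.Perm.permMatrix, PEquiv.toMatrix_apply]
  have hcost : ∑ i, ∑ j, (∑ σ, w σ • σ.permMatrix ℝ) i j * (d j - s i) ^ 2
      = ∑ σ, w σ * ∑ i, (d (σ i) - s i) ^ 2 := by
    simp_rw [← hperm, Matrix.sum_apply, Matrix.smul_apply, smul_eq_mul, Finset.sum_mul,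
      Finset.mul_sum, mul_assoc]
    exact (Finset.sum_congr rfl fun i _ => Finset.sum_comm).trans Finset.sum_comm
  calc ∑ i, (d i - s i) ^ 2 = ∑ σ, w σ * ∑ i, (d i - s i) ^ 2 := by
        rw [← Finset.sum_mul, hw1, one_mul]
    _ ≤ ∑ σ, w σ * ∑ i, (d (σ i) - s i) ^ 2 := Finset.sum_le_sum fun σ _ =>
        mul_le_mul_of_nonneg_left (sum_sq_sub_le_sum_sq_comp_perm_sub h σ) (hw0 σ)
    _ = _ := hcost.symm

-- Adding a large multiple of `e` to both `d` and `s` makes them monovary across the fibres of `e`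
-- as well, and does not change the cost of a matrix supported on those fibres.
lemma sum_sq_sub_le_of_mem_doublyStochastic_of_monovaryOn {P : Matrix ι ι ℝ}
    (hP : P ∈ doublyStochastic ℝ ι) {d s e : ι → ℝ} (hPe : ∀ i j, e i ≠ e j → P i j = 0)
    (h : ∀ a, MonovaryOn d s (e ⁻¹' {a})) :
    ∑ i, (d i - s i) ^ 2 ≤ ∑ i, ∑ j, P i j * (d j - s i) ^ 2 := by
  have hgap (u : ι → ℝ) : ∀ᶠ L : ℝ in atTop, ∀ i j, e i < e j → u i + L * e i < u j + L * e j := by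
    refine eventually_all.mpr fun i => eventually_all.mpr fun j => ?_
    filter_upwards [eventually_gt_atTop ((u i - u j) / (e j - e i))] with L hL hij
    rw [div_lt_iff₀ (sub_pos.mpr hij)] at hL
    linarith
  obtain ⟨L, hd, hs⟩ := ((hgap d).and (hgap s)).exists
  have hmono : Monovary (fun i => d i + L * e i) (fun i => s i + L * e i) := by
    intro i j hij
    rcases lt_trichotomy (e i) (e j) with hlt | heq | hgt
    · exact (hd i j hlt).le
    · simp only [heq, add_lt_add_iff_right, add_le_add_iff_right] at hij ⊢
      exact h (e j) heq rfl hij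
    · exact absurd hij (hs j i hgt).not_gt
  calc ∑ i, (d i - s i) ^ 2 = ∑ i, ((d i + L * e i) - (s i + L * e i)) ^ 2 := by
        simp only [add_sub_add_right_eq_sub]
    _ ≤ ∑ i, ∑ j, P i j * ((d j + L * e j) - (s i + L * e i)) ^ 2 :=
        sum_sq_sub_le_of_mem_doublyStochastic hP hmono
    _ = ∑ i, ∑ j, P i j * (d j - s i) ^ 2 := by
        refine Finset.sum_congr rfl fun i _ => Finset.sum_congr rfl fun j _ => ?_
        by_cases hij : e i = e j
        · rw [hij, add_sub_add_right_eq_sub]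
        · rw [hPe i j hij, zero_mul, zero_mul]

open scoped Matrix.Norms.Frobenius

variable {𝕜 : Type*} [RCLike 𝕜]

lemma norm_sq_mem_doublyStochastic {U : Matrix ι ι 𝕜} (hU : U ∈ unitaryGroup ι 𝕜) :
    Matrix.of (fun i j => ‖U i j‖ ^ 2) ∈ doublyStochastic ℝ ι := by
  have hrow {W : Matrix ι ι 𝕜} (hW : W ∈ unitaryGroup ι 𝕜) (i : ι) : ∑ j, ‖W i j‖ ^ 2 = 1 := by
    have h := congrFun₂ (mem_unitaryGroup_iff.mp hW) i i
    simp only [mul_apply, star_apply, RCLike.star_def, RCLike.mul_conj, one_apply_eq] at h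
    exact_mod_cast h
  refine mem_doublyStochastic_iff_sum.mpr ⟨fun i j => sq_nonneg _, fun i => hrow hU i, fun j => ?_⟩
  simpa [star_apply] using hrow (Unitary.star_mem hU) j

theorem hoffman_wielandt {U : Matrix ι ι 𝕜} (hU : U ∈ unitaryGroup ι 𝕜) {d s e : ι → ℝ}
    (hUe : ∀ i j, e i ≠ e j → U i j = 0) (h : ∀ a, MonovaryOn d s (e ⁻¹' {a})) :
    ∑ i, (d i - s i) ^ 2
      ≤ ‖U * diagonal (fun i => (d i : 𝕜)) * Uᴴ - diagonal (fun i => (s i : 𝕜))‖ ^ 2 := by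
  rw [frobenius_norm_conj_diagonal_sub_diagonal_sq hU]
  exact sum_sq_sub_le_of_mem_doublyStochastic_of_monovaryOn (norm_sq_mem_doublyStochastic hU)
    (fun i j hij => by simp [hUe i j hij]) h

end HoffmanWielandt

section Diagonalization

lemma exists_perm_monovary {ι α β : Type*} [Finite ι] [LinearOrder α] [LinearOrder β]
    (d : ι → α) (s : ι → β) : ∃ σ : Equiv.Perm ι, Monovary (d ∘ σ) s := by
  obtain ⟨n, ⟨φ⟩⟩ := Finite.exists_equiv_fin ι
  let σd := Tuple.sort (d ∘ φ.symm)
  let σs := Tuple.sort (s ∘ φ.symm)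
  have hsorted : Monovary ((d ∘ φ.symm) ∘ σd) ((s ∘ φ.symm) ∘ σs) :=
    (Tuple.monotone_sort _).monovary (Tuple.monotone_sort _)
  refine ⟨φ.trans ((σs.symm.trans σd).trans φ.symm), ?_⟩
  simpa [Function.comp_def] using hsorted.comp_right (σs.symm ∘ φ)

variable {ι 𝕜 : Type*} [Fintype ι] [DecidableEq ι] [RCLike 𝕜]

lemma exists_eq_conj_diagonal_monovary {A : Matrix ι ι 𝕜} (hA : A.IsHermitian)
    (s : ι → ℝ) : ∃ U ∈ unitaryGroup ι 𝕜, ∃ d : ι → ℝ,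
      A = U * diagonal (fun i => (d i : 𝕜)) * Uᴴ ∧ Monovary d s := by
  obtain ⟨σ, hσ⟩ := exists_perm_monovary hA.eigenvalues s
  let U : Matrix ι ι 𝕜 := hA.eigenvectorUnitary
  refine ⟨U.submatrix id σ, mem_unitaryGroup_iff.mpr ?_, hA.eigenvalues ∘ σ, ?_, hσ⟩
  · rw [star_eq_conjTranspose, conjTranspose_submatrix, submatrix_mul_equiv,
      ← star_eq_conjTranspose, mem_unitaryGroup_iff.mp hA.eigenvectorUnitary.2, submatrix_id_id]
  · have hdiag : diagonal (fun i => ((hA.eigenvalues ∘ σ) i : 𝕜))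
        = (diagonal fun i => (hA.eigenvalues i : 𝕜)).submatrix σ σ :=
      (submatrix_diagonal_equiv (fun i => (hA.eigenvalues i : 𝕜)) σ).symm
    rw [hdiag, conjTranspose_submatrix, submatrix_mul_equiv, submatrix_mul_equiv, submatrix_id_id]
    exact hA.spectral_theorem

lemma exists_block_eq_conj_diagonal_monovaryOn {κ : Type*} [Finite κ]
    {A : Matrix ι ι 𝕜} (hA : A.IsHermitian) {e : ι → κ} (hAe : ∀ i j, e i ≠ e j → A i j = 0)
    (s : ι → ℝ) : ∃ W ∈ unitaryGroup ι 𝕜, ∃ d : ι → ℝ,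
      A = W * diagonal (fun i => (d i : 𝕜)) * Wᴴ ∧ (∀ i j, e i ≠ e j → W i j = 0) ∧
        ∀ a, MonovaryOn d s (e ⁻¹' {a}) := by
  classical
  have := Fintype.ofFinite κ
  let φ : (Σ a, {i // e i = a}) ≃ ι := Equiv.sigmaFiberEquiv e
  let B (a : κ) : Matrix {i // e i = a} {i // e i = a} 𝕜 := A.submatrix (↑) (↑)
  have hB (a : κ) : (B a).IsHermitian := hA.submatrix _
  choose U hU d hBd hmono using
    fun a => exists_eq_conj_diagonal_monovary (hB a) fun i => s i
  have hAB : A.submatrix φ φ = blockDiagonal' B := by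
    ext ⟨a, i, hi⟩ ⟨b, j, hj⟩
    rcases eq_or_ne a b with rfl | hab
    · rw [blockDiagonal'_apply_eq]
      rfl
    · rw [blockDiagonal'_apply_ne B _ _ hab]
      exact hAe i j (by rwa [hi, hj])
  have hBU : blockDiagonal' B = blockDiagonal' U
      * diagonal (fun x : Σ a, {i // e i = a} => (d x.1 x.2 : 𝕜)) * (blockDiagonal' U)ᴴ := by
    rw [← blockDiagonal'_diagonal fun a i => (d a i : 𝕜), blockDiagonal'_conjTranspose U,
      ← blockDiagonal'_mul, ← blockDiagonal'_mul]
    exact congrArg _ (funext hBd)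
  refine ⟨(blockDiagonal' U).submatrix φ.symm φ.symm, mem_unitaryGroup_iff.mpr ?_,
    fun i => d (e i) ⟨i, rfl⟩, ?_, fun i j hij => blockDiagonal'_apply_ne U _ _ hij, ?_⟩
  · rw [star_eq_conjTranspose, conjTranspose_submatrix, submatrix_mul_equiv,
      blockDiagonal'_conjTranspose U, ← blockDiagonal'_mul]
    have hone : (fun a => U a * (U a)ᴴ) = 1 := funext fun a => mem_unitaryGroup_iff.mp (hU a)
    rw [hone, blockDiagonal'_one, submatrix_one_equiv]
  · have hA' : A = (blockDiagonal' B).submatrix φ.symm φ.symm := by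
      rw [← hAB, submatrix_submatrix, Equiv.self_comp_symm, submatrix_id_id]
    rw [hA', hBU, conjTranspose_submatrix, ← submatrix_mul_equiv _ _ _ φ.symm,
      ← submatrix_mul_equiv _ _ _ φ.symm, submatrix_diagonal_equiv]
    rfl
  · rintro a i rfl j hj hij
    have hj' : (⟨e j, j, rfl⟩ : Σ a, {i // e i = a}) = ⟨e i, j, hj⟩ := φ.injective rfl
    have := congrArg (fun x : Σ a, {i // e i = a} => d x.1 x.2) hj'
    exact (hmono (e i) (i := ⟨i, rfl⟩) (j := ⟨j, hj⟩) hij).trans_eq this.symm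

lemma commute_diagonal_iff {R : Type*} [CommRing R] [NoZeroDivisors R] {e : ι → R}
    {A : Matrix ι ι R} :
    Commute (diagonal e) A ↔ ∀ i j, e i ≠ e j → A i j = 0 := by
  have hentry (i j : ι) : (diagonal e * A) i j = (A * diagonal e) i j ↔ e i = e j ∨ A i j = 0 := by
    rw [diagonal_mul, mul_diagonal, mul_comm (A i j), mul_eq_mul_right_iff]
  rw [commute_iff_eq, ← Matrix.ext_iff]
  simp only [hentry, ne_eq, or_iff_not_imp_left]

open scoped Matrix.Norms.Frobenius

lemma exists_eq_conj_diagonal_of_commute_diagonal {M : Matrix ι ι 𝕜} (hM : M.IsHermitian)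
    {e : ι → ℝ} (heM : Commute (diagonal fun i => (e i : 𝕜)) M) (s : ι → ℝ) :
    ∃ W ∈ unitaryGroup ι 𝕜, ∃ d : ι → ℝ,
      M = W * diagonal (fun i => (d i : 𝕜)) * Wᴴ ∧ Commute (diagonal fun i => (e i : 𝕜)) W ∧
      (∀ a, MonovaryOn d s (e ⁻¹' {a})) ∧
      ∑ i, (d i - s i) ^ 2 ≤ ‖M - diagonal (fun i => (s i : 𝕜))‖ ^ 2 := by
  classical
  have hMe (i j : ι) (hij : e i ≠ e j) : M i j = 0 :=
    commute_diagonal_iff.mp heM i j (RCLike.ofReal_injective.ne hij)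
  obtain ⟨W, hW, d, hMW, hWe, hmono⟩ := exists_block_eq_conj_diagonal_monovaryOn hM
    (e := Set.rangeFactorization e) (fun i j hij => hMe i j fun h => hij (Subtype.ext h)) s
  have hWe' (i j : ι) (hij : e i ≠ e j) : W i j = 0 :=
    hWe i j fun h => hij (congrArg Subtype.val h)
  have hmono' (a : ℝ) : MonovaryOn d s (e ⁻¹' {a}) := by
    rintro i rfl j hj
    exact hmono (Set.rangeFactorization e i) rfl (Subtype.ext hj)
  refine ⟨W, hW, d, hMW, commute_diagonal_iff.mpr fun i j hij => ?_, hmono', ?_⟩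
  · exact hWe' i j fun h => hij (congrArg _ h)
  · rw [hMW]
    exact hoffman_wielandt hW hWe' hmono'

theorem exists_simultaneous_diagonalization {S T : Matrix ι ι 𝕜} (hS : S ∈ unitaryGroup ι 𝕜)
    (hT : T.IsHermitian) {e : ι → ℝ}
    (hcomm : Commute (S * diagonal (fun i => (e i : 𝕜)) * Sᴴ) T) (s : ι → ℝ) :
    ∃ V ∈ unitaryGroup ι 𝕜, ∃ d : ι → ℝ,
      S * diagonal (fun i => (e i : 𝕜)) * Sᴴ = V * diagonal (fun i => (e i : 𝕜)) * Vᴴ ∧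
      T = V * diagonal (fun i => (d i : 𝕜)) * Vᴴ ∧
      (∀ a, MonovaryOn d s (e ⁻¹' {a})) ∧
      ∑ i, (d i - s i) ^ 2 ≤ ‖T - S * diagonal (fun i => (s i : 𝕜)) * Sᴴ‖ ^ 2 := by
  have hSS : Sᴴ * S = 1 := mem_unitaryGroup_iff'.mp hS
  have hSS' : S * Sᴴ = 1 := mem_unitaryGroup_iff.mp hS
  set E : Matrix ι ι 𝕜 := diagonal fun i => (e i : 𝕜)
  obtain ⟨M, hM⟩ : ∃ M, M = Sᴴ * T * S := ⟨_, rfl⟩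
  have hTM : T = S * M * Sᴴ := by
    calc T = (S * Sᴴ) * T * (S * Sᴴ) := by rw [hSS', Matrix.one_mul, Matrix.mul_one]
      _ = S * M * Sᴴ := by simp only [hM, Matrix.mul_assoc]
  have hEM : E * M = M * E := by
    calc E * M = Sᴴ * (S * E * Sᴴ * T) * S := by
          simp only [hM, ← Matrix.mul_assoc, hSS, Matrix.one_mul]
      _ = Sᴴ * (T * (S * E * Sᴴ)) * S := by rw [hcomm.eq]
      _ = M * E := by simp only [hM, Matrix.mul_assoc, hSS, Matrix.mul_one]
  obtain ⟨W, hW, d, hMW, hEW, hmono, hle⟩ := exists_eq_conj_diagonal_of_commute_diagonal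
    (hM ▸ isHermitian_conjTranspose_mul_mul S hT) hEM s
  refine ⟨S * W, mul_mem hS hW, d, ?_, ?_, hmono, ?_⟩
  · calc S * E * Sᴴ = S * E * (W * Wᴴ) * Sᴴ := by
          rw [← star_eq_conjTranspose W, mem_unitaryGroup_iff.mp hW, Matrix.mul_one]
      _ = S * (E * W) * Wᴴ * Sᴴ := by simp only [Matrix.mul_assoc]
      _ = S * (W * E) * Wᴴ * Sᴴ := by rw [show E * W = W * E from hEW]
      _ = S * W * E * (S * W)ᴴ := by simp only [conjTranspose_mul, Matrix.mul_assoc]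
  · rw [hTM, hMW, conjTranspose_mul]
    simp only [Matrix.mul_assoc]
  · rwa [hTM, ← Matrix.sub_mul, ← Matrix.mul_sub, frobenius_norm_conj_unitary _ hS]

end Diagonalization

section CosineCoefficients

open Real

/-- The `k`-th cosine coefficient `(2π)⁻¹ ∫ f(x) cos(kx) dx` over `[-π, π]` of a real function: the
real part of its `k`-th Fourier coefficient, and for an even function the coefficient itself. -/
noncomputable def cosCoef (f : ℝ → ℝ) (k : ℤ) : ℝ :=
  (2 * π)⁻¹ * ∫ x in -π..π, f x * cos (k * x)

lemma cosCoef_neg_index (f : ℝ → ℝ) (k : ℤ) : cosCoef f (-k) = cosCoef f k := by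
  simp [cosCoef]

lemma cosCoef_const_mul (c : ℝ) (f : ℝ → ℝ) (k : ℤ) :
    cosCoef (fun x => c * f x) k = c * cosCoef f k := by
  simp only [cosCoef, mul_assoc, intervalIntegral.integral_const_mul]
  ring

lemma cosCoef_sub {f g : ℝ → ℝ} (hf : IntervalIntegrable f volume (-π) π)
    (hg : IntervalIntegrable g volume (-π) π) (k : ℤ) :
    cosCoef (fun x => f x - g x) k = cosCoef f k - cosCoef g k := by
  simp only [cosCoef, sub_mul]
  rw [intervalIntegral.integral_sub (hf.mul_continuousOn (by fun_prop))
    (hg.mul_continuousOn (by fun_prop)), mul_sub]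

lemma cosCoef_sum {α : Type*} {F : Finset α} {f : α → ℝ → ℝ}
    (hf : ∀ a ∈ F, IntervalIntegrable (f a) volume (-π) π) (k : ℤ) :
    cosCoef (fun x => ∑ a ∈ F, f a x) k = ∑ a ∈ F, cosCoef (f a) k := by
  simp only [cosCoef, Finset.sum_mul]
  rw [intervalIntegral.integral_finsetSum fun a ha => (hf a ha).mul_continuousOn (by fun_prop),
    Finset.mul_sum]

lemma integral_cos_int_mul (k : ℤ) : ∫ x in -π..π, cos (k * x) = if k = 0 then 2 * π else 0 := by
  split_ifs with hk
  · simp [hk, two_mul]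
  · rw [intervalIntegral.integral_comp_mul_left cos (Int.cast_ne_zero.mpr hk), integral_cos]
    simp [sin_int_mul_pi]

lemma cosCoef_cos (k l : ℤ) :
    cosCoef (fun x => cos (k * x)) l
      = ((if k - l = 0 then 1 else 0) + (if k + l = 0 then 1 else 0)) / 2 := by
  have hprod (x : ℝ) : cos (k * x) * cos (l * x)
      = 2⁻¹ * (cos ((k - l : ℤ) * x) + cos ((k + l : ℤ) * x)) := by
    push_cast
    rw [sub_mul, add_mul, cos_sub, cos_add]
    ring
  have hint (m : ℤ) : IntervalIntegrable (fun x => cos (m * x)) volume (-π) π :=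
    (by fun_prop : Continuous fun x : ℝ => cos (m * x)).intervalIntegrable _ _
  simp only [cosCoef, hprod]
  rw [intervalIntegral.integral_const_mul, intervalIntegral.integral_add (hint _) (hint _),
    integral_cos_int_mul, integral_cos_int_mul]
  split_ifs <;> field_simp <;> ring

lemma cosCoef_const (c : ℝ) (k : ℤ) : cosCoef (fun _ => c) k = if k = 0 then c else 0 := by
  have h := cosCoef_const_mul c (fun x => cos ((0 : ℤ) * x)) k
  rw [cosCoef_cos] at h
  simpa [ite_and] using h

lemma fourierCoef_ofReal (f : ℝ → ℝ) (k : ℤ) :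
    fourierCoef (fun t => (f t : ℂ)) k = ((2 * π)⁻¹ : ℝ) *
      ∫ x in -π..π, (f x : ℂ) * Complex.exp ((-(k * x) : ℝ) * Complex.I) := by
  have hexp (x : ℝ) : -Complex.I * k * x = ((-(k * x) : ℝ) : ℂ) * Complex.I := by
    push_cast
    ring
  simp only [fourierCoef, hexp]
  push_cast
  rw [one_div]

lemma intervalIntegrable_mul_exp {f : ℝ → ℝ} (hf : IntervalIntegrable f volume (-π) π) (k : ℤ) :
    IntervalIntegrable (fun x => (f x : ℂ) * Complex.exp ((-(k * x) : ℝ) * Complex.I))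
      volume (-π) π :=
  IntervalIntegrable.mul_continuousOn ⟨hf.1.ofReal, hf.2.ofReal⟩ (by fun_prop)

lemma re_fourierCoef_ofReal {f : ℝ → ℝ} (hf : IntervalIntegrable f volume (-π) π) (k : ℤ) :
    (fourierCoef (fun t => (f t : ℂ)) k).re = cosCoef f k := by
  have h := Complex.reCLM.intervalIntegral_comp_comm (intervalIntegrable_mul_exp hf k)
  simp only [Complex.reCLM_apply, Complex.re_ofReal_mul, Complex.exp_ofReal_mul_I_re, cos_neg] at h
  rw [fourierCoef_ofReal, Complex.re_ofReal_mul, ← h, cosCoef]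

lemma im_fourierCoef_ofReal_of_even {f : ℝ → ℝ} (hf : IntervalIntegrable f volume (-π) π)
    (heven : ∀ x, f (-x) = f x) (k : ℤ) : (fourierCoef (fun t => (f t : ℂ)) k).im = 0 := by
  have h := Complex.imCLM.intervalIntegral_comp_comm (intervalIntegrable_mul_exp hf k)
  simp only [Complex.imCLM_apply, Complex.im_ofReal_mul, Complex.exp_ofReal_mul_I_im, sin_neg,
    mul_neg, intervalIntegral.integral_neg] at h
  have hodd : ∫ x in -π..π, f x * sin (k * x) = -∫ x in -π..π, f x * sin (k * x) := by
    simpa [heven] using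
      (intervalIntegral.integral_comp_neg (a := -π) (b := π) fun x => f x * sin (k * x)).symm
  rw [fourierCoef_ofReal, Complex.im_ofReal_mul, ← h, self_eq_neg.mp hodd, neg_zero, mul_zero]

lemma fourierCoef_eq_fourierCoeffOn (f : ℝ → ℂ) (k : ℤ) :
    fourierCoef f k = fourierCoeffOn (neg_lt_self pi_pos) f k := by
  have hpi : (π : ℂ) ≠ 0 := by exact_mod_cast pi_ne_zero
  rw [fourierCoeffOn_eq_integral, fourierCoef, sub_neg_eq_add, ← two_mul, Complex.real_smul]
  push_cast
  congr 1
  refine intervalIntegral.integral_congr fun x _ => ?_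
  simp only [smul_eq_mul, fourier_coe_apply]
  rw [mul_comm]
  congr 2
  push_cast
  field_simp

lemma hasSum_sq_norm_fourierCoef {f : ℝ → ℂ} (hf : MemLp f 2 (volume.restrict (Set.Ioc (-π) π))) :
    HasSum (fun k => ‖fourierCoef f k‖ ^ 2) ((2 * π)⁻¹ * ∫ x in -π..π, ‖f x‖ ^ 2) := by
  simp only [fourierCoef_eq_fourierCoeffOn]
  convert hasSum_sq_fourierCoeffOn (neg_lt_self pi_pos) hf using 1
  rw [sub_neg_eq_add, ← two_mul, smul_eq_mul]

lemma intervalIntegrable_of_memLp_two {f : ℝ → ℝ}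
    (hf : MemLp f 2 (volume.restrict (Set.Ioc (-π) π))) : IntervalIntegrable f volume (-π) π :=
  (intervalIntegrable_iff_integrableOn_Ioc_of_le (neg_lt_self pi_pos).le).mpr
    (hf.integrable one_le_two)

lemma sum_sq_cosCoef_le {f : ℝ → ℝ} (hf : MemLp f 2 (volume.restrict (Set.Ioc (-π) π)))
    (F : Finset ℤ) : ∑ k ∈ F, cosCoef f k ^ 2 ≤ (2 * π)⁻¹ * ∫ x in -π..π, f x ^ 2 := by
  have hparseval := hasSum_sq_norm_fourierCoef (f := fun t => (f t : ℂ)) hf.ofReal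
  simp only [Complex.norm_real, norm_eq_abs, sq_abs] at hparseval
  refine le_trans (Finset.sum_le_sum fun k _ => ?_)
    (sum_le_hasSum F (fun k _ => sq_nonneg _) hparseval)
  rw [← re_fourierCoef_ofReal (intervalIntegrable_of_memLp_two hf), ← sq_abs]
  exact pow_le_pow_left₀ (abs_nonneg _) (Complex.abs_re_le_norm _) 2

lemma hasSum_sq_cosCoef_of_even {f : ℝ → ℝ} (hf : MemLp f 2 (volume.restrict (Set.Ioc (-π) π)))
    (heven : ∀ x, f (-x) = f x) :
    HasSum (fun k => cosCoef f k ^ 2) ((2 * π)⁻¹ * ∫ x in -π..π, f x ^ 2) := by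
  have hint := intervalIntegrable_of_memLp_two hf
  have hreal (k : ℤ) : fourierCoef (fun t => (f t : ℂ)) k = (cosCoef f k : ℂ) :=
    Complex.ext (re_fourierCoef_ofReal hint k) (im_fourierCoef_ofReal_of_even hint heven k)
  have hparseval := hasSum_sq_norm_fourierCoef (f := fun t => (f t : ℂ)) hf.ofReal
  simpa only [hreal, Complex.norm_real, norm_eq_abs, sq_abs] using hparseval

end CosineCoefficients

section CosineApproximation

open Real

/-- The trigonometric cosine polynomial `∑ aₖ cos(kx)` with frequencies `k ∈ F`. -/
noncomputable def cosPoly (F : Finset ℤ) (a : ℤ → ℝ) (x : ℝ) : ℝ := ∑ k ∈ F, a k * cos (k * x)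

lemma continuous_cosPoly (F : Finset ℤ) (a : ℤ → ℝ) : Continuous (cosPoly F a) := by
  unfold cosPoly
  fun_prop

lemma cosPoly_neg (F : Finset ℤ) (a : ℤ → ℝ) (x : ℝ) : cosPoly F a (-x) = cosPoly F a x := by
  simp [cosPoly]

lemma cosCoef_cosPoly (F : Finset ℤ) (a : ℤ → ℝ) (l : ℤ) :
    cosCoef (cosPoly F a) l = ∑ k ∈ F, a k * cosCoef (fun x => cos (k * x)) l := by
  simp only [← cosCoef_const_mul]
  exact cosCoef_sum (fun k _ => (by fun_prop : Continuous _).intervalIntegrable _ _) l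

lemma cosCoef_cosPoly_cosCoef (f : ℝ → ℝ) (m : ℤ) (l : ℤ) :
    cosCoef (cosPoly (Finset.Icc (-m) m) (cosCoef f)) l
      = if l ∈ Finset.Icc (-m) m then cosCoef f l else 0 := by
  have hneg : -l ∈ Finset.Icc (-m) m ↔ l ∈ Finset.Icc (-m) m := by
    simp only [Finset.mem_Icc]
    lia
  simp only [cosCoef_cosPoly, cosCoef_cos, sub_eq_zero, add_eq_zero_iff_eq_neg, mul_div_assoc',
    mul_add, mul_ite, mul_one, mul_zero]
  rw [← Finset.sum_div, Finset.sum_add_distrib, Finset.sum_ite_eq', Finset.sum_ite_eq',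
    cosCoef_neg_index, if_congr hneg rfl rfl, add_self_div_two]

lemma memLp_cosPoly (F : Finset ℤ) (a : ℤ → ℝ) :
    MemLp (cosPoly F a) 2 (volume.restrict (Set.Ioc (-π) π)) :=
  (memLp_two_iff_integrable_sq (continuous_cosPoly F a).aestronglyMeasurable).mpr
    (((continuous_cosPoly F a).pow 2).integrableOn_Ioc)

lemma integral_sub_cosPoly_cosCoef_sq {f : ℝ → ℝ}
    (hf : MemLp f 2 (volume.restrict (Set.Ioc (-π) π))) (heven : ∀ x, f (-x) = f x) (m : ℤ) :
    (2 * π)⁻¹ * ∫ x in -π..π, (f x - cosPoly (Finset.Icc (-m) m) (cosCoef f) x) ^ 2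
      = (2 * π)⁻¹ * (∫ x in -π..π, f x ^ 2) - ∑ k ∈ Finset.Icc (-m) m, cosCoef f k ^ 2 := by
  set F := Finset.Icc (-m) m
  have hp := memLp_cosPoly F (cosCoef f)
  have hparseval := hasSum_sq_cosCoef_of_even (f := fun x => f x - cosPoly F (cosCoef f) x)
    (hf.sub hp) fun x => by rw [heven, cosPoly_neg]
  have hcoef (k : ℤ) : cosCoef (fun x => f x - cosPoly F (cosCoef f) x) k ^ 2
      + (if k ∈ F then cosCoef f k ^ 2 else 0) = cosCoef f k ^ 2 := by
    rw [cosCoef_sub (intervalIntegrable_of_memLp_two hf) (intervalIntegrable_of_memLp_two hp),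
      cosCoef_cosPoly_cosCoef]
    split_ifs <;> simp
  have hsum := hparseval.add
    (hasSum_sum_of_ne_finset_zero (f := fun k => if k ∈ F then cosCoef f k ^ 2 else 0) (s := F)
      fun k hk => if_neg hk)
  simp only [hcoef] at hsum
  rw [(hasSum_sq_cosCoef_of_even hf heven).unique hsum, Finset.sum_congr rfl fun k hk => if_pos hk,
    add_sub_cancel_right]

lemma exists_integral_sub_cosPoly_sq_lt {f : ℝ → ℝ}
    (hf : MemLp f 2 (volume.restrict (Set.Ioc (-π) π))) (heven : ∀ x, f (-x) = f x)
    {ε : ℝ} (hε : 0 < ε) :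
    ∃ (F : Finset ℤ) (a : ℤ → ℝ), (2 * π)⁻¹ * ∫ x in -π..π, (f x - cosPoly F a x) ^ 2 < ε := by
  have htail := ((hasSum_sq_cosCoef_of_even hf heven).comp
    Finset.tendsto_Icc_neg_atTop_atTop).const_sub ((2 * π)⁻¹ * ∫ x in -π..π, f x ^ 2)
  rw [sub_self] at htail
  obtain ⟨m, hm⟩ := (htail.eventually_lt_const hε).exists
  exact ⟨_, _, (integral_sub_cosPoly_cosCoef_sq hf heven m).trans_lt hm⟩

end CosineApproximation

section Toeplitz

open Real
open scoped Matrix.Norms.Frobenius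

/-- The real symmetric Toeplitz matrix generated by a real function `f`, with cosine coefficients
as entries; it coincides with `toeplitzR f` as soon as `f` is integrable. -/
noncomputable def cosToeplitz (f : ℝ → ℝ) (n : ℕ) : Matrix (Fin n) (Fin n) ℝ :=
  Matrix.of fun i j => cosCoef f ((i : ℤ) - (j : ℤ))

lemma toeplitzR_ofReal {f : ℝ → ℝ} (hf : IntervalIntegrable f volume (-π) π) (n : ℕ) :
    toeplitzR (fun t => (f t : ℂ)) n = cosToeplitz f n := by
  ext i j
  exact re_fourierCoef_ofReal hf _

lemma isHermitian_cosToeplitz (f : ℝ → ℝ) (n : ℕ) : (cosToeplitz f n).IsHermitian := by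
  ext i j
  simp [cosToeplitz, ← cosCoef_neg_index f ((j : ℤ) - i)]

lemma cosToeplitz_sub {f g : ℝ → ℝ} (hf : IntervalIntegrable f volume (-π) π)
    (hg : IntervalIntegrable g volume (-π) π) (n : ℕ) :
    cosToeplitz (fun x => f x - g x) n = cosToeplitz f n - cosToeplitz g n := by
  ext i j
  exact cosCoef_sub hf hg _

lemma cosToeplitz_const (c : ℝ) (n : ℕ) : cosToeplitz (fun _ => c) n = c • 1 := by
  ext i j
  simp [cosToeplitz, cosCoef_const, one_apply, sub_eq_zero, Fin.ext_iff]

lemma cosToeplitz_cosPoly (F : Finset ℤ) (a : ℤ → ℝ) (n : ℕ) :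
    cosToeplitz (cosPoly F a) n = ∑ k ∈ F, a k • cosToeplitz (fun x => cos (k * x)) n := by
  ext i j
  simp [cosToeplitz, cosCoef_cosPoly, Matrix.sum_apply]

lemma norm_cosToeplitz_sq_le {f : ℝ → ℝ} (hf : MemLp f 2 (volume.restrict (Set.Ioc (-π) π)))
    (n : ℕ) : ‖cosToeplitz f n‖ ^ 2 ≤ n * ((2 * π)⁻¹ * ∫ x in -π..π, f x ^ 2) := by
  have hrow (i : Fin n) :
      ∑ j, ‖cosToeplitz f n i j‖ ^ 2 ≤ (2 * π)⁻¹ * ∫ x in -π..π, f x ^ 2 := by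
    have hinj : Function.Injective fun j : Fin n => (i : ℤ) - j := fun j l h => by
      exact Fin.ext (by lia)
    calc ∑ j, ‖cosToeplitz f n i j‖ ^ 2
        = ∑ k ∈ Finset.univ.map ⟨_, hinj⟩, cosCoef f k ^ 2 := by simp [cosToeplitz]
      _ ≤ _ := sum_sq_cosCoef_le hf _
  rw [frobenius_norm_sq]
  simpa using Finset.sum_le_sum fun i (_ : i ∈ Finset.univ) => hrow i

lemma dotProduct_cosToeplitz_mulVec {f : ℝ → ℝ} (hf : IntervalIntegrable f volume (-π) π) {n : ℕ}
    (c : Fin n → ℝ) : c ⬝ᵥ cosToeplitz f n *ᵥ c = (2 * π)⁻¹ * ∫ x in -π..π,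
      f x * ((∑ i, c i * cos (i * x)) ^ 2 + (∑ i, c i * sin (i * x)) ^ 2) := by
  have hentry (i j : Fin n) : c i * (cosToeplitz f n i j * c j)
      = cosCoef (fun x => f x * (c i * c j * cos (((i : ℤ) - j : ℤ) * x))) 0 := by
    simp only [cosToeplitz, of_apply, cosCoef, Int.cast_zero, zero_mul, cos_zero, mul_one,
      mul_left_comm (f _), intervalIntegral.integral_const_mul]
    ring
  have hsquares (x : ℝ) : ∑ i, ∑ j, f x * (c i * c j * cos (((i : ℤ) - j : ℤ) * x))
      = f x * ((∑ i, c i * cos (i * x)) ^ 2 + (∑ i, c i * sin (i * x)) ^ 2) := by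
    rw [sq, sq, Finset.sum_mul_sum, Finset.sum_mul_sum, ← Finset.sum_add_distrib, Finset.mul_sum]
    simp only [← Finset.sum_add_distrib, Finset.mul_sum]
    refine Finset.sum_congr rfl fun i _ => Finset.sum_congr rfl fun j _ => ?_
    push_cast
    rw [sub_mul, cos_sub]
    ring
  have hint (i j : Fin n) : IntervalIntegrable
      (fun x => f x * (c i * c j * cos (((i : ℤ) - j : ℤ) * x))) volume (-π) π :=
    hf.mul_continuousOn (by fun_prop)
  have hint_sum (i : Fin n) : IntervalIntegrable
      (fun x => ∑ j : Fin n, f x * (c i * c j * cos (((i : ℤ) - j : ℤ) * x))) volume (-π) π := by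
    simpa only [Finset.sum_fn] using IntervalIntegrable.sum Finset.univ fun j _ => hint i j
  simp only [dotProduct, mulVec, Finset.mul_sum, hentry]
  simp only [← cosCoef_sum fun j _ => hint _ j]
  rw [← cosCoef_sum fun i _ => hint_sum i]
  simp only [cosCoef, hsquares, Int.cast_zero, zero_mul, cos_zero, mul_one]

lemma posSemidef_cosToeplitz {f : ℝ → ℝ} (hf : IntervalIntegrable f volume (-π) π)
    (hnonneg : ∀ x ∈ Set.Icc (-π) π, 0 ≤ f x) (n : ℕ) : (cosToeplitz f n).PosSemidef := by
  refine PosSemidef.of_dotProduct_mulVec_nonneg (isHermitian_cosToeplitz f n) fun c => ?_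
  rw [star_trivial, dotProduct_cosToeplitz_mulVec hf]
  refine mul_nonneg (by positivity) (intervalIntegral.integral_nonneg (by linarith [pi_pos]) ?_)
  exact fun x hx => mul_nonneg (hnonneg x hx) (by positivity)

lemma mem_Icc_of_cosToeplitz_eq {f : ℝ → ℝ} (hf : IntervalIntegrable f volume (-π) π) {A B : ℝ}
    (hbound : ∀ x ∈ Set.Icc (-π) π, f x ∈ Set.Icc A B) {n : ℕ} {V : Matrix (Fin n) (Fin n) ℝ}
    (hV : V ∈ unitaryGroup (Fin n) ℝ) {d : Fin n → ℝ}
    (hd : cosToeplitz f n = V * diagonal d * Vᴴ) (i : Fin n) : d i ∈ Set.Icc A B := by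
  have hVV : V * Vᴴ = 1 := mem_unitaryGroup_iff.mp hV
  have hunit : IsUnit V := .of_mul_eq_one _ hVV
  have hscalar (c : ℝ) : (c • 1 : Matrix (Fin n) (Fin n) ℝ) = V * diagonal (fun _ => c) * Vᴴ := by
    rw [← smul_one_eq_diagonal, Matrix.mul_smul, Matrix.smul_mul, mul_one, hVV]
  constructor
  · have hpos := posSemidef_cosToeplitz (f := fun x => f x - A) (hf.sub intervalIntegrable_const)
      (fun x hx => sub_nonneg.mpr (hbound x hx).1) n
    rw [cosToeplitz_sub hf intervalIntegrable_const, cosToeplitz_const, hscalar, hd,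
      ← Matrix.sub_mul, ← Matrix.mul_sub, diagonal_sub, ← star_eq_conjTranspose,
      hunit.posSemidef_star_right_conjugate_iff, posSemidef_diagonal_iff] at hpos
    exact sub_nonneg.mp (hpos i)
  · have hpos := posSemidef_cosToeplitz (f := fun x => B - f x) (intervalIntegrable_const.sub hf)
      (fun x hx => sub_nonneg.mpr (hbound x hx).2) n
    rw [cosToeplitz_sub intervalIntegrable_const hf, cosToeplitz_const, hscalar, hd,
      ← Matrix.sub_mul, ← Matrix.mul_sub, diagonal_sub, ← star_eq_conjTranspose,
      hunit.posSemidef_star_right_conjugate_iff, posSemidef_diagonal_iff] at hpos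
    exact sub_nonneg.mp (hpos i)

end Toeplitz

section SineTransform

open Real
open scoped Matrix.Norms.Frobenius

/-- The node `(i + 1)π / (n + 1)` of the discrete sine transform, indexed from `i = 0`. -/
noncomputable def sineNode (n : ℕ) (i : Fin n) : ℝ := ((i : ℕ) + 1) * π / (n + 1)

/-- The discrete sine transform of type I, normalized to be orthogonal. -/
noncomputable def sineTransform (n : ℕ) : Matrix (Fin n) (Fin n) ℝ :=
  Matrix.of fun i j => √(2 / (n + 1)) * sin (((i : ℕ) + 1) * sineNode n j)

/-- The matrix with eigenvalues `d` in the basis of the discrete sine transform; these matrices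
form the τ algebra. -/
noncomputable def tauMatrix {n : ℕ} (d : Fin n → ℝ) : Matrix (Fin n) (Fin n) ℝ :=
  sineTransform n * diagonal d * (sineTransform n)ᴴ

/-- The indicator of the multiples of `2(n + 1)`, the frequencies which the nodes
`jπ / (n + 1)` cannot distinguish from zero. -/
noncomputable def aliasIndicator (n : ℕ) (r : ℤ) : ℝ := if (2 * (n + 1) : ℤ) ∣ r then 1 else 0

lemma aliasIndicator_of_abs_lt {n : ℕ} {r : ℤ} (hr : |r| < 2 * (n + 1)) :
    aliasIndicator n r = if r = 0 then 1 else 0 :=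
  if_congr ⟨fun h => Int.eq_zero_of_abs_lt_dvd h hr, fun h => h ▸ dvd_zero _⟩ rfl rfl

lemma sum_cos_node_of_dvd {n : ℕ} {r : ℤ} (hr : (2 * (n + 1) : ℤ) ∣ r) :
    ∑ j ∈ Finset.range (n + 1), cos (r * (j * π / (n + 1))) = n + 1 := by
  obtain ⟨q, rfl⟩ := hr
  have hone (j : ℕ) : cos (((2 * (n + 1) * q : ℤ) : ℝ) * (j * π / (n + 1))) = 1 := by
    have hn : (n + 1 : ℝ) ≠ 0 := by positivity
    refine (congrArg cos ?_).trans (cos_int_mul_two_pi (q * j))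
    push_cast
    field_simp
  simp only [hone]
  simp

lemma sum_cos_node_of_not_dvd {n : ℕ} {r : ℤ} (hr : ¬(2 * (n + 1) : ℤ) ∣ r) :
    ∑ j ∈ Finset.range (n + 1), cos (r * (j * π / (n + 1))) = sin (r * π / 2) ^ 2 := by
  have hn : (n + 1 : ℝ) ≠ 0 := by positivity
  set a : ℝ := r * π / (n + 1) with ha
  have hne (q : ℤ) : a ≠ q * (2 * π) := fun h => hr ⟨q, by
    rw [ha, div_eq_iff hn] at h
    exact_mod_cast mul_right_cancel₀ pi_ne_zero (h.trans (by ring) : _ = 2 * (n + 1) * q * π)⟩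
  have hsin : sin (a / 2) ≠ 0 := fun h => by
    obtain ⟨q, hq⟩ := sin_eq_zero_iff.mp h
    exact hne q (by linarith)
  have hsum := sum_cos (n + 1) hne 0
  have hlast : (n + 1 : ℕ) * a / 2 = r * π / 2 := by
    rw [ha]
    push_cast
    field_simp
  have hmid : ((n + 1 : ℕ) - 1) * a / 2 + 0 = r * π / 2 - a / 2 := by linear_combination hlast
  have hsin_cos : sin (r * π / 2) * cos (r * π / 2) = 0 := by
    have h := sin_two_mul (r * π / 2)
    rw [mul_div_cancel₀ _ two_ne_zero, sin_int_mul_pi] at h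
    linarith
  rw [hlast, hmid, cos_sub, mul_add, ← mul_assoc, hsin_cos, zero_mul, zero_add, ← mul_assoc,
    mul_div_cancel_right₀ _ hsin, ← sq] at hsum
  rw [← hsum]
  refine Finset.sum_congr rfl fun j _ => congrArg cos ?_
  rw [ha]
  ring

lemma sum_cos_node (n : ℕ) (r : ℤ) : ∑ j ∈ Finset.range (n + 1), cos (r * (j * π / (n + 1)))
    = (n + 1) * aliasIndicator n r + sin (r * π / 2) ^ 2 := by
  unfold aliasIndicator
  split_ifs with hr
  · obtain ⟨q, hq⟩ := (dvd_mul_right (2 : ℤ) (n + 1)).trans hr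
    have hzero : sin (r * π / 2) = 0 := by
      rw [← sin_int_mul_pi q, hq]
      push_cast
      ring_nf
    rw [sum_cos_node_of_dvd hr, hzero]
    ring
  · rw [sum_cos_node_of_not_dvd hr]
    ring

lemma sin_add_two_mul_int_mul_pi_div_two_sq (r q : ℤ) :
    sin ((r + 2 * q : ℤ) * π / 2) ^ 2 = sin (r * π / 2) ^ 2 := by
  have hsplit : ((r + 2 * q : ℤ) : ℝ) * π / 2 = r * π / 2 + q * π := by
    push_cast
    ring
  rw [hsplit, sin_add_int_mul_pi, mul_pow, ← zpow_natCast, ← _root_.zpow_mul,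
    Even.neg_one_zpow (by simp), one_mul]

lemma sin_mul_cos_mul_sin (x y z : ℝ) : sin x * cos y * sin z
    = (cos (x - z - y) + cos (x - z + y) - cos (x + z - y) - cos (x + z + y)) / 4 := by
  simp only [cos_add, cos_sub, sin_add, sin_sub]
  ring

lemma sum_sin_mul_cos_mul_sin_sineNode (n : ℕ) (p q k : ℤ) :
    ∑ i, sin (p * sineNode n i) * cos (k * sineNode n i) * sin (q * sineNode n i)
      = (n + 1) / 4 * (aliasIndicator n (p - q - k) + aliasIndicator n (p - q + k)
          - aliasIndicator n (p + q - k) - aliasIndicator n (p + q + k)) := by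
  set g : ℝ → ℝ := fun y => sin (p * y) * cos (k * y) * sin (q * y)
  have hg (y : ℝ) : g y = (cos ((p - q - k : ℤ) * y) + cos ((p - q + k : ℤ) * y)
      - cos ((p + q - k : ℤ) * y) - cos ((p + q + k : ℤ) * y)) / 4 := by
    simp only [g, sin_mul_cos_mul_sin]
    push_cast
    ring_nf
  have hrange : ∑ i, g (sineNode n i) = ∑ j ∈ Finset.range (n + 1), g (j * π / (n + 1)) := by
    rw [Finset.sum_range_succ',
      ← Fin.sum_univ_eq_sum_range (fun j => g ((j + 1 : ℕ) * π / (n + 1)))]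
    simp [g, sineNode]
  have hparity₁ := sin_add_two_mul_int_mul_pi_div_two_sq (p - q - k) k
  have hparity₂ := sin_add_two_mul_int_mul_pi_div_two_sq (p - q - k) q
  have hparity₃ := sin_add_two_mul_int_mul_pi_div_two_sq (p - q - k) (q + k)
  rw [show p - q - k + 2 * k = p - q + k by ring] at hparity₁
  rw [show p - q - k + 2 * q = p + q - k by ring] at hparity₂
  rw [show p - q - k + 2 * (q + k) = p + q + k by ring] at hparity₃
  change ∑ i, g (sineNode n i) = _
  rw [hrange]
  simp only [hg, ← Finset.sum_div, Finset.sum_sub_distrib, Finset.sum_add_distrib,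
    sum_cos_node, hparity₁, hparity₂, hparity₃]
  ring

lemma tauMatrix_cos_apply (n : ℕ) (k : ℤ) (a b : Fin n) :
    tauMatrix (fun i => cos (k * sineNode n i)) a b
      = (aliasIndicator n (a - b - k) + aliasIndicator n (a - b + k)
          - aliasIndicator n (a + b + 2 - k) - aliasIndicator n (a + b + 2 + k)) / 2 := by
  have hsqrt : √(2 / ((n : ℝ) + 1)) * √(2 / (n + 1)) = 2 / (n + 1) :=
    mul_self_sqrt (by positivity)
  have hsum := sum_sin_mul_cos_mul_sin_sineNode n (a + 1) (b + 1) k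
  rw [show (a + 1 - (b + 1) : ℤ) = a - b by ring, show (a + 1 + (b + 1) : ℤ) = a + b + 2 by ring]
    at hsum
  calc _ = ∑ i, √(2 / ((n : ℝ) + 1)) * √(2 / (n + 1)) * (sin ((a + 1 : ℤ) * sineNode n i)
        * cos (k * sineNode n i) * sin ((b + 1 : ℤ) * sineNode n i)) := by
        rw [tauMatrix, mul_apply]
        refine Finset.sum_congr rfl fun i _ => ?_
        simp only [mul_diagonal, conjTranspose_apply, star_trivial, sineTransform, of_apply]
        push_cast
        ring
    _ = _ := by
        rw [← Finset.mul_sum, hsqrt, hsum]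
        field_simp
        ring

lemma sineTransform_mem_unitaryGroup (n : ℕ) : sineTransform n ∈ unitaryGroup (Fin n) ℝ := by
  rw [mem_unitaryGroup_iff, star_eq_conjTranspose]
  ext a b
  have hcos := tauMatrix_cos_apply n 0 a b
  simp only [tauMatrix, Int.cast_zero, zero_mul, cos_zero, diagonal_one, Matrix.mul_one, sub_zero,
    add_zero] at hcos
  rw [hcos, aliasIndicator_of_abs_lt (r := a - b) (by rw [abs_lt]; omega),
    aliasIndicator_of_abs_lt (r := a + b + 2) (by rw [abs_lt]; omega),
    if_neg (c := (a + b + 2 : ℤ) = 0) (by omega), one_apply]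
  simp only [Fin.ext_iff, sub_eq_zero, Nat.cast_inj]
  split_ifs <;> norm_num

lemma tauMatrix_sub {n : ℕ} (d e : Fin n → ℝ) :
    tauMatrix (fun i => d i - e i) = tauMatrix d - tauMatrix e := by
  rw [tauMatrix, ← diagonal_sub, Matrix.mul_sub, Matrix.sub_mul, tauMatrix, tauMatrix]

lemma tauMatrix_sum_smul {ι : Type*} (F : Finset ι) {n : ℕ} (a : ι → ℝ) (d : ι → Fin n → ℝ) :
    tauMatrix (fun i => ∑ k ∈ F, a k * d k i) = ∑ k ∈ F, a k • tauMatrix (d k) := by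
  have hdiag : diagonal (fun i => ∑ k ∈ F, a k * d k i) = ∑ k ∈ F, a k • diagonal (d k) := by
    ext i j
    by_cases hij : i = j <;> simp [hij, Matrix.sum_apply]
  simp only [tauMatrix, hdiag, Finset.mul_sum, Finset.sum_mul, Matrix.mul_smul, Matrix.smul_mul]

lemma norm_tauMatrix_sq {n : ℕ} (d : Fin n → ℝ) : ‖tauMatrix d‖ ^ 2 = ∑ i, d i ^ 2 := by
  rw [tauMatrix, frobenius_norm_conj_unitary _ (sineTransform_mem_unitaryGroup n),
    frobenius_norm_diagonal, EuclideanSpace.norm_sq_eq]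
  simp

lemma cosToeplitz_cos_sub_apply {n k : ℕ} (hk : k ≤ n) (a b : Fin n) :
    (cosToeplitz (fun x => cos ((k : ℤ) * x)) n
        - tauMatrix (fun i => cos ((k : ℤ) * sineNode n i))) a b
      = ((if (a : ℕ) + b + 2 = k then 1 else 0)
          + (if (a.rev : ℕ) + b.rev + 2 = k then 1 else 0)) / 2 := by
  have hrev : aliasIndicator n (a + b + 2 + k) = if (a.rev : ℕ) + b.rev + 2 = k then 1 else 0 := by
    have hshift : aliasIndicator n (a + b + 2 + k)
        = aliasIndicator n (a + b + 2 + k - 2 * (n + 1)) :=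
      if_congr (dvd_sub_self_right).symm rfl rfl
    rw [hshift, aliasIndicator_of_abs_lt (by rw [abs_lt]; omega)]
    refine if_congr ?_ rfl rfl
    simp only [Fin.val_rev]
    omega
  have hdirect : aliasIndicator n (a + b + 2 - k) = if (a : ℕ) + b + 2 = k then 1 else 0 := by
    rw [aliasIndicator_of_abs_lt (by rw [abs_lt]; omega)]
    exact if_congr (by omega) rfl rfl
  have hsub : aliasIndicator n (a - b - k) = if (k - (a - b) : ℤ) = 0 then 1 else 0 := by
    rw [aliasIndicator_of_abs_lt (by rw [abs_lt]; omega)]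
    exact if_congr (by omega) rfl rfl
  have hadd : aliasIndicator n (a - b + k) = if (k + (a - b) : ℤ) = 0 then 1 else 0 := by
    rw [aliasIndicator_of_abs_lt (by rw [abs_lt]; omega)]
    exact if_congr (by omega) rfl rfl
  rw [Matrix.sub_apply, tauMatrix_cos_apply, hrev, hdirect, hsub, hadd]
  simp only [cosToeplitz, of_apply, cosCoef_cos]
  ring

lemma sum_boole_add_add_two_eq_le (n k : ℕ) :
    ∑ a : Fin n, ∑ b : Fin n, (if (a : ℕ) + b + 2 = k then (1 : ℝ) else 0) ≤ k := by
  rw [← Fintype.sum_prod_type', Finset.sum_boole]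
  refine Nat.cast_le.mpr ((Finset.card_le_card_of_injOn (t := Finset.range k) (fun p => p.1)
    (fun p hp => ?_) fun p hp q hq hpq => ?_).trans_eq (Finset.card_range k))
  · have hsum := (Finset.mem_filter.mp hp).2
    exact Finset.mem_coe.mpr (Finset.mem_range.mpr (show (p.1 : ℕ) < k by omega))
  · have hp' := (Finset.mem_filter.mp hp).2
    have hq' := (Finset.mem_filter.mp hq).2
    have hfst : (p.1 : ℕ) = q.1 := hpq
    ext <;> omega

lemma norm_cosToeplitz_cos_sub_sq_le {n k : ℕ} (hk : k ≤ n) :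
    ‖cosToeplitz (fun x => cos ((k : ℤ) * x)) n
        - tauMatrix (fun i => cos ((k : ℤ) * sineNode n i))‖ ^ 2 ≤ k := by
  set e : Fin n → Fin n → ℝ := fun a b => if (a : ℕ) + b + 2 = k then 1 else 0 with he
  have hentry (a b : Fin n) : ((e a b + e a.rev b.rev) / 2) ^ 2 ≤ (e a b + e a.rev b.rev) / 2 := by
    simp only [he]
    split_ifs <;> norm_num
  have hrev : ∑ a, ∑ b, e (Fin.rev a) (Fin.rev b) = ∑ a, ∑ b, e a b := by
    rw [← Equiv.sum_comp Fin.revPerm fun a => ∑ b, e a b]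
    exact Finset.sum_congr rfl fun a _ => Equiv.sum_comp Fin.revPerm (e a.rev)
  rw [frobenius_norm_sq]
  calc _ = ∑ a, ∑ b, ((e a b + e a.rev b.rev) / 2) ^ 2 := by
        simp only [cosToeplitz_cos_sub_apply hk, norm_eq_abs, sq_abs, he]
    _ ≤ ∑ a, ∑ b, (e a b + e a.rev b.rev) / 2 :=
        Finset.sum_le_sum fun a _ => Finset.sum_le_sum fun b _ => hentry a b
    _ = ∑ a, ∑ b, e a b := by
        simp only [← Finset.sum_div, Finset.sum_add_distrib, hrev, add_self_div_two]
    _ ≤ k := sum_boole_add_add_two_eq_le n k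

end SineTransform

section Flip

open Real

lemma flipM_mul_apply {n : ℕ} (A : Matrix (Fin n) (Fin n) ℝ) (i j : Fin n) :
    (flipM n * A) i j = A i.rev j := by
  rw [mul_apply, Finset.sum_eq_single i.rev]
  · rw [flipM, of_apply, Fin.val_rev, if_pos (by omega), one_mul]
  · intro k _ hk
    rw [flipM, of_apply, if_neg fun h => hk (Fin.ext (by rw [Fin.val_rev]; omega)), zero_mul]
  · simp

lemma transpose_flipM (n : ℕ) : (flipM n)ᵀ = flipM n := by
  ext i j
  simp only [flipM, transpose_apply, of_apply, add_comm]

lemma mul_flipM_apply {n : ℕ} (A : Matrix (Fin n) (Fin n) ℝ) (i j : Fin n) :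
    (A * flipM n) i j = A i j.rev := by
  rw [← transpose_apply (A * flipM n), transpose_mul, transpose_flipM, flipM_mul_apply,
    transpose_apply]

lemma commute_flipM_cosToeplitz (f : ℝ → ℝ) (n : ℕ) : Commute (flipM n) (cosToeplitz f n) := by
  ext i j
  rw [flipM_mul_apply, mul_flipM_apply, cosToeplitz, of_apply, of_apply, ← cosCoef_neg_index,
    Fin.val_rev, Fin.val_rev]
  congr 1
  omega

lemma flipM_mul_sineTransform (n : ℕ) :
    flipM n * sineTransform n = sineTransform n * diagonal (fun i : Fin n => (-1) ^ (i : ℕ)) := by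
  ext i j
  have hreflect : ((i.rev : ℕ) + 1) * sineNode n j
      = (j + 1 : ℕ) * π - ((i : ℕ) + 1) * sineNode n j := by
    rw [Fin.val_rev, Nat.cast_sub i.2, sineNode]
    push_cast
    field_simp
    ring
  rw [flipM_mul_apply, mul_diagonal]
  simp only [sineTransform, of_apply]
  rw [hreflect, sin_sub, sin_nat_mul_pi, cos_nat_mul_pi, pow_succ]
  ring

lemma flipM_eq_tauMatrix (n : ℕ) : flipM n = tauMatrix (fun i : Fin n => (-1) ^ (i : ℕ)) := by
  rw [tauMatrix, ← flipM_mul_sineTransform, Matrix.mul_assoc, ← star_eq_conjTranspose,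
    mem_unitaryGroup_iff.mp (sineTransform_mem_unitaryGroup n), Matrix.mul_one]

end Flip

section RiemannSums

/-- The grids `x n` of `n` points are asymptotically uniform in `[a, b]`; the point of index `i`,
counted from `0`, is compared with `a + (i + 1)(b - a) / (n + 1)`. -/
def IsAsymptoticallyUniform (a b : ℝ) (x : (n : ℕ) → Fin n → ℝ) : Prop :=
  ∀ ε > 0, ∃ N : ℕ, ∀ n ≥ N, ∀ i : Fin n, |x n i - (a + ((i : ℕ) + 1) * (b - a) / (n + 1))| < ε

lemma integral_comp_natFloor (h : ℕ → ℝ) (n : ℕ) :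
    ∫ u in (0 : ℝ)..n, h ⌊u⌋₊ = ∑ i ∈ Finset.range n, h i := by
  have hcell (i : ℕ) : (fun _ : ℝ => h i)
      =ᵐ[volume.restrict (Set.uIoc (i : ℝ) (i + 1 : ℕ))] fun u => h ⌊u⌋₊ := by
    rw [Set.uIoc_of_le (by simp), ← restrict_Ioo_eq_restrict_Ioc]
    filter_upwards [ae_restrict_mem measurableSet_Ioo] with u hu
    rw [(Nat.floor_eq_iff (i.cast_nonneg.trans hu.1.le)).mpr ⟨hu.1.le, by simpa using hu.2⟩]
  rw [← Nat.cast_zero, ← intervalIntegral.sum_integral_adjacent_intervals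
    fun i _ => intervalIntegrable_const.congr_ae (hcell i)]
  refine Finset.sum_congr rfl fun i _ => ?_
  rw [← intervalIntegral.integral_congr_ae_restrict (hcell i)]
  simp

lemma integral_comp_natFloor_sub_mul {a b : ℝ} (hab : a < b) (h : ℕ → ℝ) {n : ℕ} (hn : 0 < n) :
    ∫ t in a..b, h ⌊(t - a) / (b - a) * n⌋₊ = (b - a) * ((∑ i ∈ Finset.range n, h i) / n) := by
  have hba : b - a ≠ 0 := (sub_pos.mpr hab).ne'
  have hn' : (n : ℝ) ≠ 0 := by positivity
  simp only [div_mul_eq_mul_div, mul_div_assoc]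
  rw [intervalIntegral.integral_comp_sub_right (fun s => h ⌊s * (n / (b - a))⌋₊) a,
    intervalIntegral.integral_comp_mul_right (fun u => h ⌊u⌋₊) (div_ne_zero hn' hba), sub_self,
    zero_mul, mul_div_cancel₀ _ hba, integral_comp_natFloor, smul_eq_mul, inv_div]
  ring

lemma natFloor_mul_lt_self {c : ℝ} (hc : c < 1) {n : ℕ} (hn : 0 < n) : ⌊c * n⌋₊ < n := by
  rcases le_or_gt c 0 with hc0 | hc0
  · rwa [Nat.floor_of_nonpos (mul_nonpos_of_nonpos_of_nonneg hc0 n.cast_nonneg)]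
  · rw [Nat.floor_lt (by positivity)]
    exact mul_lt_of_lt_one_left (by exact_mod_cast hn) hc

lemma tendsto_natFloor_mul_div {c : ℝ} (hc : 0 ≤ c) :
    Tendsto (fun n : ℕ => (⌊c * n⌋₊ : ℝ) / n) atTop (nhds c) :=
  (tendsto_nat_floor_mul_div_atTop hc).comp tendsto_natCast_atTop_atTop

lemma tendsto_uniform_grid_natFloor {a b t : ℝ} (hab : a < b) (hat : a ≤ t) :
    Tendsto (fun n : ℕ => a + ((⌊(t - a) / (b - a) * n⌋₊ : ℝ) + 1) * (b - a) / (n + 1)) atTop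
      (nhds t) := by
  have hba : 0 < b - a := sub_pos.mpr hab
  have hfloor := tendsto_natFloor_mul_div (div_nonneg (sub_nonneg.mpr hat) hba.le)
  have hlim := ((hfloor.mul (tendsto_natCast_div_add_atTop (1 : ℝ))).add
    tendsto_one_div_add_atTop_nhds_zero_nat).mul_const (b - a) |>.const_add a
  rw [mul_one, add_zero, div_mul_cancel₀ _ hba.ne', add_sub_cancel] at hlim
  refine hlim.congr' ?_
  filter_upwards [eventually_gt_atTop 0] with n hn
  field_simp

lemma IsAsymptoticallyUniform.tendsto_natFloor {a b t : ℝ} {x : (n : ℕ) → Fin n → ℝ}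
    (hx : IsAsymptoticallyUniform a b x) (ht : t ∈ Set.Ioo a b) {y : ℕ → ℕ → ℝ}
    (hy : ∀ n (i : Fin n), y n i = x n i) :
    Tendsto (fun n : ℕ => y n ⌊(t - a) / (b - a) * n⌋₊) atTop (nhds t) := by
  have hta : 0 < t - a := sub_pos.mpr ht.1
  have hba : 0 < b - a := hta.trans (sub_lt_sub_right ht.2 a)
  refine (tendsto_uniform_grid_natFloor (sub_pos.mp hba) ht.1.le).congr_dist
    (Metric.tendsto_atTop.mpr fun ε hε => ?_)
  obtain ⟨N, hN⟩ := hx ε hε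
  refine ⟨max N 1, fun n hn => ?_⟩
  have hfloor : ⌊(t - a) / (b - a) * n⌋₊ < n :=
    natFloor_mul_lt_self ((div_lt_one hba).mpr (sub_lt_sub_right ht.2 a))
      ((le_max_right N 1).trans hn)
  rw [hy n ⟨_, hfloor⟩, Real.dist_0_eq_abs, abs_dist, dist_comm, Real.dist_eq]
  exact hN n ((le_max_left N 1).trans hn) ⟨_, hfloor⟩

lemma IsAsymptoticallyUniform.tendsto_sum_div {a b : ℝ} {x : (n : ℕ) → Fin n → ℝ}
    (hx : IsAsymptoticallyUniform a b x) (hab : a < b) {g : ℝ → ℝ} {C : ℝ}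
    (hg_bdd : ∀ t ∈ Set.Icc a b, |g t| ≤ C)
    (hg_cont : ∀ᵐ t ∂volume.restrict (Set.Icc a b), ContinuousWithinAt g (Set.Icc a b) t)
    (hx_mem : ∀ n i, x n i ∈ Set.Icc a b) :
    Tendsto (fun n : ℕ => (∑ i, g (x n i)) / n) atTop
      (nhds ((b - a)⁻¹ * ∫ t in a..b, g t)) := by
  have hba : 0 < b - a := sub_pos.mpr hab
  set y : ℕ → ℕ → ℝ := fun n i => if hi : i < n then x n ⟨i, hi⟩ else a with hy
  have hy_mem (n i : ℕ) : y n i ∈ Set.Icc a b := by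
    simp only [hy]
    split_ifs
    exacts [hx_mem _ _, Set.left_mem_Icc.mpr hab.le]
  have hy_tendsto {t : ℝ} (ht : t ∈ Set.Ioo a b) :
      Tendsto (fun n : ℕ => y n ⌊(t - a) / (b - a) * n⌋₊) atTop (nhds t) :=
    hx.tendsto_natFloor ht fun n i => by simp [hy]
  have hint : Tendsto (fun n : ℕ => ∫ t in a..b, g (y n ⌊(t - a) / (b - a) * n⌋₊)) atTop
      (nhds (∫ t in a..b, g t)) := by
    refine intervalIntegral.tendsto_integral_filter_of_dominated_convergence (fun _ => C)
      (.of_forall fun n => Measurable.aestronglyMeasurable ?_)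
      (.of_forall fun n => .of_forall fun t _ => hg_bdd _ (hy_mem _ _)) intervalIntegrable_const ?_
    · exact (measurable_from_top (f := fun i => g (y n i))).comp
        (Nat.measurable_floor.comp (by fun_prop))
    · rw [Set.uIoc_of_le hab.le, ← ae_restrict_iff' measurableSet_Ioc,
        ← restrict_Ioo_eq_restrict_Ioc]
      filter_upwards [ae_mono (Measure.restrict_mono Set.Ioo_subset_Icc_self le_rfl) hg_cont,
        ae_restrict_mem measurableSet_Ioo] with t hcont ht
      exact hcont.tendsto.comp (tendsto_nhdsWithin_iff.mpr
        ⟨hy_tendsto ht, .of_forall fun n => hy_mem _ _⟩)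
  refine (hint.const_mul (b - a)⁻¹).congr' ?_
  filter_upwards [eventually_gt_atTop 0] with n hn
  rw [integral_comp_natFloor_sub_mul hab (fun i => g (y n i)) hn, inv_mul_cancel_left₀ hba.ne',
    Finset.sum_range]
  simp [hy]

end RiemannSums

section BoundedAEContinuous

lemma aestronglyMeasurable_of_ae_continuousWithinAt {β : Type*} [PseudoMetricSpace β] {f : ℝ → β}
    {a b : ℝ} (hf : ∀ᵐ x ∂volume.restrict (Set.Icc a b), ContinuousWithinAt f (Set.Icc a b) x) :
    AEStronglyMeasurable f (volume.restrict (Set.Icc a b)) := by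
  have hmeas : MeasurableSet {x | ContinuousAt f x} := (IsGδ.setOfPred_continuousAt f).measurableSet
  have hcont : AEStronglyMeasurable f (volume.restrict {x | ContinuousAt f x}) :=
    ContinuousOn.aestronglyMeasurable (fun _ hx => ContinuousAt.continuousWithinAt hx) hmeas
  rw [← restrict_Ioo_eq_restrict_Icc] at hf ⊢
  have hae : ∀ᵐ x ∂volume.restrict (Set.Ioo a b), x ∈ {x | ContinuousAt f x} := by
    filter_upwards [hf, ae_restrict_mem measurableSet_Ioo] with x hx hx'
    exact hx.continuousAt (Icc_mem_nhds hx'.1 hx'.2)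
  rw [← Measure.restrict_eq_self_of_ae_mem hae, Measure.restrict_restrict hmeas]
  exact hcont.mono_measure (Measure.restrict_mono Set.inter_subset_left le_rfl)

lemma memLp_of_ae_continuousWithinAt {E : Type*} [NormedAddCommGroup E] {f : ℝ → E} {a b C : ℝ}
    (hf_bdd : ∀ x ∈ Set.Icc a b, ‖f x‖ ≤ C)
    (hf_cont : ∀ᵐ x ∂volume.restrict (Set.Icc a b), ContinuousWithinAt f (Set.Icc a b) x)
    (p : ENNReal) : MemLp f p (volume.restrict (Set.Ioc a b)) := by
  rw [restrict_Ioc_eq_restrict_Icc]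
  exact .of_bound (aestronglyMeasurable_of_ae_continuousWithinAt hf_cont) C
    ((ae_restrict_mem measurableSet_Icc).mono hf_bdd)

end BoundedAEContinuous

section SampledSymbols

open Real Asymptotics
open scoped Matrix.Norms.Frobenius

variable {x : (n : ℕ) → Fin n → ℝ}

lemma integral_of_even {h : ℝ → ℝ} {a : ℝ} (hint : IntervalIntegrable h volume (-a) a)
    (heven : ∀ t, h (-t) = h t) : ∫ t in -a..a, h t = 2 * ∫ t in 0..a, h t := by
  have hzero : (0 : ℝ) ∈ Set.uIcc (-a) a := by
    rcases le_total 0 a with ha | ha <;> simp [ha]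
  have hneg : ∫ t in -a..0, h t = ∫ t in 0..a, h t := by
    simpa only [heven, neg_zero] using
      (intervalIntegral.integral_comp_neg (a := 0) (b := a) h).symm
  rw [← intervalIntegral.integral_add_adjacent_intervals (b := 0)
    (hint.mono_set (Set.uIcc_subset_uIcc_left hzero))
    (hint.mono_set (Set.uIcc_subset_uIcc_right hzero)), hneg, two_mul]

lemma norm_tauMatrix_le {n : ℕ} {d : Fin n → ℝ} {c : ℝ} (hc : 0 ≤ c) (hd : ∀ i, |d i| ≤ c) :
    ‖tauMatrix d‖ ≤ c * √n := by
  refine le_of_sq_le_sq ?_ (by positivity)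
  calc ‖tauMatrix d‖ ^ 2 = ∑ i, |d i| ^ 2 := by simp only [norm_tauMatrix_sq, sq_abs]
    _ ≤ ∑ _i : Fin n, c ^ 2 := by gcongr; exact hd _
    _ = (c * √n) ^ 2 := by simp [mul_pow, mul_comm]

lemma isLittleO_norm_tauMatrix_sub_sineNode (hx : IsAsymptoticallyUniform 0 π x) {g : ℝ → ℝ}
    (hg : UniformContinuous g) :
    (fun n => ‖tauMatrix (fun i => g (sineNode n i)) - tauMatrix (fun i => g (x n i))‖)
      =o[atTop] fun n : ℕ => √n := by
  refine isLittleO_iff.mpr fun c hc => ?_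
  obtain ⟨δ, hδ, hgδ⟩ := Metric.uniformContinuous_iff.mp hg c hc
  obtain ⟨N, hN⟩ := hx δ hδ
  filter_upwards [eventually_ge_atTop N] with n hn
  rw [norm_norm, norm_of_nonneg (sqrt_nonneg _), ← tauMatrix_sub]
  refine norm_tauMatrix_le hc.le fun i => (hgδ ?_).le
  rw [dist_comm, dist_eq]
  simpa [sineNode] using hN n hn i

lemma isLittleO_norm_cosToeplitz_cos_sub (hx : IsAsymptoticallyUniform 0 π x) (k : ℤ) :
    (fun n => ‖cosToeplitz (fun t => cos (k * t)) n - tauMatrix (fun i => cos (k * x n i))‖)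
      =o[atTop] fun n : ℕ => √n := by
  wlog hk : 0 ≤ k generalizing k
  · simpa using this (-k) (by lia)
  lift k to ℕ using hk
  have hnodes : (fun n => ‖cosToeplitz (fun t => cos ((k : ℤ) * t)) n
      - tauMatrix (fun i => cos ((k : ℤ) * sineNode n i))‖) =o[atTop] fun n : ℕ => √n := by
    refine IsBigO.trans_isLittleO (g := fun _ => √k) (.of_bound 1 ?_) ?_
    · filter_upwards [eventually_ge_atTop k] with n hn
      rw [norm_norm, norm_of_nonneg (sqrt_nonneg _), one_mul]
      exact le_sqrt_of_sq_le (norm_cosToeplitz_cos_sub_sq_le hn)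
    · exact isLittleO_const_left.mpr (.inr (tendsto_norm_atTop_atTop.comp
        (tendsto_sqrt_atTop.comp tendsto_natCast_atTop_atTop)))
  have hcos : UniformContinuous fun t => cos ((k : ℤ) * t) :=
    lipschitzWith_cos.uniformContinuous.comp (uniformContinuous_const_smul ((k : ℤ) : ℝ))
  refine IsBigO.trans_isLittleO (.of_norm_le fun n => ?_)
    (hnodes.add (isLittleO_norm_tauMatrix_sub_sineNode hx hcos))
  rw [norm_norm]
  exact norm_sub_le_norm_sub_add_norm_sub ..

lemma isLittleO_norm_cosToeplitz_cosPoly_sub (hx : IsAsymptoticallyUniform 0 π x) (F : Finset ℤ)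
    (a : ℤ → ℝ) :
    (fun n => ‖cosToeplitz (cosPoly F a) n - tauMatrix (fun i => cosPoly F a (x n i))‖)
      =o[atTop] fun n : ℕ => √n := by
  refine IsBigO.trans_isLittleO (.of_norm_le fun n => ?_) (IsLittleO.sum fun k (_ : k ∈ F) =>
    (isLittleO_norm_cosToeplitz_cos_sub hx k).const_mul_left |a k|)
  simp only [norm_norm, cosToeplitz_cosPoly, cosPoly, tauMatrix_sum_smul, ← Finset.sum_sub_distrib,
    ← smul_sub]
  exact (norm_sum_le _ _).trans_eq (by simp only [norm_smul, norm_eq_abs, Finset.sum_apply])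

lemma eventually_norm_tauMatrix_sq_le (hx : IsAsymptoticallyUniform 0 π x)
    (hx_mem : ∀ n i, x n i ∈ Set.Icc 0 π) {g : ℝ → ℝ} (hg_even : ∀ t, g (-t) = g t) {C : ℝ}
    (hg_bdd : ∀ t ∈ Set.Icc (-π) π, |g t| ≤ C)
    (hg_cont : ∀ᵐ t ∂volume.restrict (Set.Icc (-π) π), ContinuousWithinAt g (Set.Icc (-π) π) t)
    {ε : ℝ} (hε : (2 * π)⁻¹ * ∫ t in -π..π, g t ^ 2 < ε) :
    ∀ᶠ n in atTop, ‖tauMatrix (fun i => g (x n i))‖ ^ 2 ≤ ε * n := by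
  have hsub : Set.Icc 0 π ⊆ Set.Icc (-π) π := Set.Icc_subset_Icc_left (by linarith [pi_pos])
  have hmean := hx.tendsto_sum_div pi_pos (g := fun t => g t ^ 2) (C := C ^ 2)
    (fun t ht => by rw [abs_pow]; gcongr; exact hg_bdd t (hsub ht))
    ((ae_restrict_of_ae_restrict_of_subset hsub hg_cont).mono fun t ht => (ht.mono hsub).pow 2)
    hx_mem
  have hhalf : (π - 0)⁻¹ * ∫ t in 0..π, g t ^ 2 = (2 * π)⁻¹ * ∫ t in -π..π, g t ^ 2 := by
    have hint : IntervalIntegrable (fun t => g t ^ 2) volume (-π) π :=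
      (intervalIntegrable_iff_integrableOn_Ioc_of_le (neg_lt_self pi_pos).le).mpr
        (memLp_of_ae_continuousWithinAt hg_bdd hg_cont 2).integrable_sq
    rw [integral_of_even hint fun t => by rw [hg_even], sub_zero, mul_inv]
    ring
  rw [hhalf] at hmean
  filter_upwards [hmean.eventually_le_const hε, eventually_gt_atTop 0] with n hn hn0
  rw [norm_tauMatrix_sq]
  exact (div_le_iff₀ (by positivity)).mp hn

lemma norm_cosToeplitz_sub_tauMatrix_le {f g : ℝ → ℝ} (hf : IntervalIntegrable f volume (-π) π)
    (hg : IntervalIntegrable g volume (-π) π) {n : ℕ} (y : Fin n → ℝ) :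
    ‖cosToeplitz f n - tauMatrix (fun i => f (y i))‖
      ≤ ‖cosToeplitz g n - tauMatrix (fun i => g (y i))‖ + ‖cosToeplitz (fun t => f t - g t) n‖
        + ‖tauMatrix (fun i => f (y i) - g (y i))‖ := by
  have hsplit : cosToeplitz f n - tauMatrix (fun i => f (y i))
      = cosToeplitz g n - tauMatrix (fun i => g (y i)) + cosToeplitz (fun t => f t - g t) n
        - tauMatrix (fun i => f (y i) - g (y i)) := by
    rw [cosToeplitz_sub hf hg, tauMatrix_sub]
    abel
  rw [hsplit]
  exact (norm_sub_le _ _).trans (by gcongr; exact norm_add_le _ _)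

theorem isLittleO_norm_cosToeplitz_sub_tauMatrix (hx : IsAsymptoticallyUniform 0 π x)
    (hx_mem : ∀ n i, x n i ∈ Set.Icc 0 π) {f : ℝ → ℝ} (hf_even : ∀ t, f (-t) = f t) {C : ℝ}
    (hf_bdd : ∀ t ∈ Set.Icc (-π) π, |f t| ≤ C)
    (hf_cont : ∀ᵐ t ∂volume.restrict (Set.Icc (-π) π), ContinuousWithinAt f (Set.Icc (-π) π) t) :
    (fun n => ‖cosToeplitz f n - tauMatrix (fun i => f (x n i))‖) =o[atTop] fun n : ℕ => √n := by
  refine isLittleO_iff.mpr fun c hc => ?_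
  have hf := memLp_of_ae_continuousWithinAt hf_bdd hf_cont 2
  obtain ⟨F, a, happrox⟩ := exists_integral_sub_cosPoly_sq_lt hf hf_even
    (show 0 < (c / 3) ^ 2 by positivity)
  set p := cosPoly F a
  have hp_cont : Continuous p := continuous_cosPoly F a
  have hp : MemLp p 2 (volume.restrict (Set.Ioc (-π) π)) := memLp_cosPoly F a
  obtain ⟨Cp, hCp⟩ := (isCompact_Icc (a := -π) (b := π)).exists_bound_of_continuousOn
    hp_cont.continuousOn
  have hsample := eventually_norm_tauMatrix_sq_le hx hx_mem (g := fun t => f t - p t) (C := C + Cp)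
    (fun t => by simp only [hf_even, p, cosPoly_neg])
    (fun t ht => (abs_sub _ _).trans (add_le_add (hf_bdd t ht) (hCp t ht)))
    (hf_cont.mono fun t ht => ht.sub hp_cont.continuousWithinAt) happrox
  filter_upwards [hsample, isLittleO_iff.mp (isLittleO_norm_cosToeplitz_cosPoly_sub hx F a)
    (show 0 < c / 3 by positivity)] with n hn_sample hn_poly
  have hn_toeplitz : ‖cosToeplitz (fun t => f t - p t) n‖ ^ 2 ≤ (c / 3) ^ 2 * n := by
    refine (norm_cosToeplitz_sq_le (hf.sub hp) n).trans ?_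
    rw [mul_comm]
    gcongr
    exact happrox.le
  rw [← sq_sqrt n.cast_nonneg, ← mul_pow] at hn_sample hn_toeplitz
  rw [norm_norm, norm_of_nonneg (sqrt_nonneg _)] at hn_poly ⊢
  calc ‖cosToeplitz f n - tauMatrix (fun i => f (x n i))‖
      ≤ ‖cosToeplitz p n - tauMatrix (fun i => p (x n i))‖ + ‖cosToeplitz (fun t => f t - p t) n‖
        + ‖tauMatrix (fun i => f (x n i) - p (x n i))‖ :=
        norm_cosToeplitz_sub_tauMatrix_le (intervalIntegrable_of_memLp_two hf)
          (intervalIntegrable_of_memLp_two hp) _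
    _ ≤ c / 3 * √n + c / 3 * √n + c / 3 * √n := by
        gcongr
        · exact le_of_sq_le_sq hn_toeplitz (by positivity)
        · exact le_of_sq_le_sq hn_sample (by positivity)
    _ = c * √n := by ring

end SampledSymbols

section SampleDensity

lemma essRangeR_subset_of_even {f : ℝ → ℝ} (heven : ∀ t, f (-t) = f t) (c : ℝ) :
    essRangeR f (Set.Icc (-c) c) ⊆ essRangeR f (Set.Icc 0 c) := by
  intro y hy ε hε
  refine pos_iff_ne_zero.mpr fun hnull => (hy ε hε).ne' ?_
  refine measure_mono_null (fun t ht => ?_)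
    (measure_union_null hnull ((Measure.measure_neg volume _).trans hnull))
  rcases le_total 0 t with h0 | h0
  · exact .inl ⟨⟨h0, ht.1.2⟩, ht.2⟩
  · exact .inr ⟨⟨neg_nonneg.mpr h0, neg_le.mp ht.1.1⟩, by rw [heven]; exact ht.2⟩

lemma exists_continuousAt_of_mem_essRangeR {f : ℝ → ℝ} {a b : ℝ}
    (hf : ∀ᵐ t ∂volume.restrict (Set.Icc a b), ContinuousWithinAt f (Set.Icc a b) t) {y : ℝ}
    (hy : y ∈ essRangeR f (Set.Icc a b)) {ε : ℝ} (hε : 0 < ε) :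
    ∃ z ∈ Set.Ioo a b, ContinuousAt f z ∧ |f z - y| < ε := by
  obtain ⟨z, ⟨hz, hzy⟩, ⟨hza, hzb⟩, hcont⟩ :=
    ((frequently_ae_mem_iff.mpr (hy ε hε).ne').and_eventually
      (((Measure.ae_ne volume a).and (Measure.ae_ne volume b)).and
        ((ae_restrict_iff' measurableSet_Icc).mp hf))).exists
  have hza' : a < z := lt_of_le_of_ne hz.1 hza.symm
  have hzb' : z < b := lt_of_le_of_ne hz.2 hzb
  exact ⟨z, ⟨hza', hzb'⟩, (hcont hz).continuousAt (Icc_mem_nhds hza' hzb'), hzy⟩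

lemma le_card_Ioc_filter_modEq {r : ℕ} (hr : 0 < r) (m n v : ℕ) :
    ((n : ℝ) - m) / r - 1 ≤ (Finset.Ioc m n |>.filter (· ≡ v [MOD r])).card := by
  have hcard := Nat.Ioc_filter_modEq_card m n hr v
  have hn := Int.lt_floor_add_one (((n : ℚ) - v) / r)
  have hm := Int.floor_le (((m : ℚ) - v) / r)
  have hmax := le_max_left (⌊((n : ℚ) - v) / r⌋ - ⌊((m : ℚ) - v) / r⌋) 0
  rw [← hcard] at hmax
  have hle : ((n : ℚ) - m) / r - 1 ≤ (Finset.Ioc m n |>.filter (· ≡ v [MOD r])).card := by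
    have hsub : ((n : ℚ) - m) / r = (n - v) / r - (m - v) / r := by ring
    have hmax' := (Int.cast_le (R := ℚ)).mpr hmax
    push_cast at hmax'
    linarith
  exact_mod_cast (Rat.cast_le (K := ℝ)).mpr hle

lemma tendsto_natFloor_sub_natFloor_div {c c' : ℝ} (hc : 0 ≤ c) (hc' : 0 ≤ c') (r : ℝ) :
    Tendsto (fun n : ℕ => (((⌊c' * n⌋₊ : ℝ) - ⌊c * n⌋₊) / r - 1) / n) atTop
      (nhds ((c' - c) / r)) := by
  have hlim := (((tendsto_natFloor_mul_div hc').sub (tendsto_natFloor_mul_div hc)).div_const r).sub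
    tendsto_one_div_atTop_nhds_zero_nat
  rw [sub_zero] at hlim
  refine hlim.congr fun n => ?_
  ring

lemma uniform_grid_mem_Ioo {a b z z' : ℝ} (haz : a < z) (hzz' : z < z') (hzb : z' < b) {n k : ℕ}
    (hk : ⌊(z - a) / (b - a) * n⌋₊ < k) (hk' : k ≤ ⌊(z' - a) / (b - a) * n⌋₊) :
    a + ((k : ℝ) + 1) * (b - a) / (n + 1) ∈ Set.Ioo z (z' + (b - a) / (n + 1)) := by
  have hba : 0 < b - a := by linarith
  have hlow : (z - a) * n < k * (b - a) := by
    rw [← div_lt_iff₀ hba, mul_div_right_comm]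
    exact Nat.lt_of_floor_lt hk
  have hupp : k * (b - a) ≤ (z' - a) * n := by
    rw [← le_div_iff₀ hba, mul_div_right_comm]
    exact (Nat.le_floor_iff
      (mul_nonneg (div_nonneg (by linarith) hba.le) n.cast_nonneg)).mp hk'
  constructor
  · rw [← sub_lt_iff_lt_add', lt_div_iff₀ (by positivity)]
    linarith
  · rw [← sub_lt_sub_iff_right a, add_sub_cancel_left, div_lt_iff₀ (by positivity)]
    field_simp
    linarith

variable {a b : ℝ} {x : (n : ℕ) → Fin n → ℝ}

lemma IsAsymptoticallyUniform.exists_mul_le_card_modEq (hx : IsAsymptoticallyUniform a b x)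
    {z : ℝ} (hz : z ∈ Set.Ioo a b) {η : ℝ} (hη : 0 < η) {r : ℕ} (hr : 0 < r) :
    ∃ δ > (0 : ℝ), ∀ᶠ n : ℕ in atTop, ∀ v,
      δ * n ≤ Finset.card {k : Fin n | k ≡ v [MOD r] ∧ |x n k - z| < η} := by
  obtain ⟨z', hzz', hz'⟩ := exists_between (lt_min hz.2 (lt_add_of_pos_right z (half_pos hη)))
  obtain ⟨hz'b, hz'η⟩ := lt_min_iff.mp hz'
  have hba : 0 < b - a := by linarith [hz.1, hz.2]
  obtain ⟨N, hN⟩ := hx (η / 4) (by positivity)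
  have hdensity := tendsto_natFloor_sub_natFloor_div (c := (z - a) / (b - a))
    (c' := (z' - a) / (b - a)) (div_nonneg (by linarith [hz.1]) hba.le)
    (div_nonneg (by linarith [hz.1]) hba.le) r
  rw [← sub_div, sub_sub_sub_cancel_right] at hdensity
  have hmesh : ∀ᶠ n : ℕ in atTop, (b - a) / ((n : ℝ) + 1) < η / 4 := by
    have hlim := tendsto_one_div_add_atTop_nhds_zero_nat.const_mul (b - a)
    simp only [mul_zero, mul_one_div] at hlim
    exact hlim.eventually_lt_const (by positivity)
  have hδ : 0 < (z' - z) / (b - a) / r := by have := sub_pos.mpr hzz'; positivity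
  refine ⟨_, half_pos hδ, ?_⟩
  filter_upwards [hmesh, hdensity.eventually_const_lt (half_lt_self hδ),
    eventually_ge_atTop N, eventually_gt_atTop 0] with n hmesh_n hdensity_n hNn hn v
  refine ((lt_div_iff₀ (by exact_mod_cast hn)).mp hdensity_n).le.trans
    ((le_card_Ioc_filter_modEq hr _ _ v).trans ?_)
  rw [← Finset.card_map Fin.valEmbedding]
  gcongr
  intro k hk
  obtain ⟨⟨hmk, hkm'⟩, hkv⟩ := by simpa only [Finset.mem_filter, Finset.mem_Ioc] using hk
  have hkn : k < n :=
    hkm'.trans_lt (natFloor_mul_lt_self ((div_lt_one hba).mpr (sub_lt_sub_right hz'b a)) hn)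
  have hgrid := uniform_grid_mem_Ioo hz.1 hzz' hz'b hmk hkm'
  have hxk := abs_lt.mp (hN n hNn ⟨k, hkn⟩)
  simp only [Finset.mem_map, Finset.mem_filter, Finset.mem_univ, true_and]
  refine ⟨⟨k, hkn⟩, ⟨hkv, abs_lt.mpr ⟨?_, ?_⟩⟩, rfl⟩ <;> linarith [hgrid.1, hgrid.2]

lemma IsAsymptoticallyUniform.exists_mul_le_card_abs_sub_lt (hx : IsAsymptoticallyUniform a b x)
    {f : ℝ → ℝ} (hf : ∀ᵐ t ∂volume.restrict (Set.Icc a b), ContinuousWithinAt f (Set.Icc a b) t)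
    {r : ℕ} (hr : 0 < r) {y : ℝ} (hy : y ∈ essRangeR f (Set.Icc a b)) {ρ : ℝ} (hρ : 0 < ρ) :
    ∃ δ > (0 : ℝ), ∀ᶠ n : ℕ in atTop, ∀ v,
      δ * n ≤ Finset.card {k : Fin n | k ≡ v [MOD r] ∧ |f (x n k) - y| < ρ} := by
  obtain ⟨z, hz, hcont, hzy⟩ := exists_continuousAt_of_mem_essRangeR hf hy hρ
  obtain ⟨η, hη, hnear⟩ := Metric.eventually_nhds_iff.mp
    ((hcont.sub continuousAt_const).abs.eventually_lt continuousAt_const hzy)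
  obtain ⟨δ, hδ, hcard⟩ := hx.exists_mul_le_card_modEq hz hη hr
  refine ⟨δ, hδ, hcard.mono fun n hn v => (hn v).trans ?_⟩
  norm_cast
  refine Finset.card_le_card (Finset.monotone_filter_right _ fun k _ hk => ?_)
  exact ⟨hk.1, hnear hk.2⟩

theorem IsAsymptoticallyUniform.exists_forall_mul_le_card_abs_sub_lt
    (hx : IsAsymptoticallyUniform a b x) {f : ℝ → ℝ}
    (hf : ∀ᵐ t ∂volume.restrict (Set.Icc a b), ContinuousWithinAt f (Set.Icc a b) t)
    {r : ℕ} (hr : 0 < r) {K : Set ℝ} (hK : IsCompact K) (hKf : K ⊆ essRangeR f (Set.Icc a b))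
    {ρ : ℝ} (hρ : 0 < ρ) :
    ∃ δ > (0 : ℝ), ∀ᶠ n : ℕ in atTop, ∀ y ∈ K, ∀ v,
      δ * n ≤ Finset.card {k : Fin n | k ≡ v [MOD r] ∧ |f (x n k) - y| < ρ} := by
  refine hK.induction_on (p := fun K => ∃ δ > (0 : ℝ), ∀ᶠ n : ℕ in atTop, ∀ y ∈ K, ∀ v, δ * n ≤
    Finset.card {k : Fin n | k ≡ v [MOD r] ∧ |f (x n k) - y| < ρ}) ?_ ?_ ?_ ?_
  · exact ⟨1, one_pos, .of_forall fun _ _ h => h.elim⟩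
  · rintro s t hst ⟨δ, hδ, ht⟩
    exact ⟨δ, hδ, ht.mono fun n hn y hy => hn y (hst hy)⟩
  · rintro s t ⟨δ, hδ, hs⟩ ⟨δ', hδ', ht⟩
    refine ⟨min δ δ', lt_min hδ hδ', hs.mp (ht.mono fun n hnt hns y hy v => ?_)⟩
    rcases hy with hy | hy
    · exact (mul_le_mul_of_nonneg_right (min_le_left _ _) n.cast_nonneg).trans (hns y hy v)
    · exact (mul_le_mul_of_nonneg_right (min_le_right _ _) n.cast_nonneg).trans (hnt y hy v)
  · intro y hy
    obtain ⟨δ, hδ, hcard⟩ := hx.exists_mul_le_card_abs_sub_lt hf hr (hKf hy) (half_pos hρ)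
    refine ⟨Metric.ball y (ρ / 2),
      mem_nhdsWithin_of_mem_nhds (Metric.ball_mem_nhds y (half_pos hρ)), δ, hδ,
      hcard.mono fun n hn y' hy' v => (hn v).trans ?_⟩
    rw [Metric.mem_ball', Real.dist_eq] at hy'
    norm_cast
    refine Finset.card_le_card (Finset.monotone_filter_right _ fun k _ hk => ?_)
    exact ⟨hk.1, (abs_sub_le _ y _).trans_lt (by linarith [hk.2])⟩

end SampleDensity

section EigenvalueMatching

open scoped Matrix.Norms.Frobenius

-- Monotonicity carries the defect at `i` over to all indices whose sample lies just on the side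
-- of `s i` towards `d i`.
lemma exists_forall_le_abs_sub_of_monovaryOn {ι : Type*} {d s : ι → ℝ} {t : Set ι}
    (hmono : MonovaryOn d s t) {i : ι} (hi : i ∈ t) {A B : ℝ} (hs : s i ∈ Set.Icc A B)
    (hd : d i ∈ Set.Icc A B) {ρ : ℝ} (hρ : 0 < ρ) (hdefect : 2 * ρ ≤ |s i - d i|) :
    ∃ y ∈ Set.Icc A B, ∀ k ∈ t, |s k - y| < ρ / 2 → ρ ≤ |d k - s k| := by
  rcases le_abs'.mp hdefect with hlt | hgt
  · refine ⟨s i + ρ / 2, ⟨by linarith [hs.1], by linarith [hd.2]⟩, fun k hk hsk => ?_⟩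
    have hsk' := abs_lt.mp hsk
    have hdk : d i ≤ d k := hmono hi hk (by linarith)
    exact (by linarith : ρ ≤ d k - s k).trans (le_abs_self _)
  · refine ⟨s i - ρ / 2, ⟨by linarith [hd.1], by linarith [hs.2]⟩, fun k hk hsk => ?_⟩
    have hsk' := abs_lt.mp hsk
    have hdk : d k ≤ d i := hmono hk hi (by linarith)
    exact (by linarith : ρ ≤ -(d k - s k)).trans (neg_le_abs _)

lemma sq_mul_card_le_sum_sq {ι : Type*} [Fintype ι] {u : ι → ℝ} {t : Finset ι} {ρ : ℝ}
    (hρ : 0 ≤ ρ) (ht : ∀ k ∈ t, ρ ≤ |u k|) : ρ ^ 2 * t.card ≤ ∑ k, u k ^ 2 := by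
  calc ρ ^ 2 * t.card = ∑ _k ∈ t, ρ ^ 2 := by rw [Finset.sum_const, nsmul_eq_mul, mul_comm]
    _ ≤ ∑ k ∈ t, u k ^ 2 := Finset.sum_le_sum fun k hk => by
      rw [← sq_abs (u k)]
      exact pow_le_pow_left₀ hρ (ht k hk) 2
    _ ≤ ∑ k, u k ^ 2 :=
      Finset.sum_le_sum_of_subset_of_nonneg t.subset_univ fun k _ _ => sq_nonneg _

theorem eventually_forall_abs_sub_lt_of_monovaryOn_modEq {d s : (n : ℕ) → Fin n → ℝ} {r : ℕ}
    {A B : ℝ} (hs : ∀ n i, s n i ∈ Set.Icc A B) (hd : ∀ n i, d n i ∈ Set.Icc A B)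
    (hmono : ∀ n v, MonovaryOn (d n) (s n) {k | k ≡ v [MOD r]})
    (hdense : ∀ ρ > 0, ∃ δ > (0 : ℝ), ∀ᶠ n : ℕ in atTop, ∀ y ∈ Set.Icc A B, ∀ v,
      δ * n ≤ Finset.card {k : Fin n | k ≡ v [MOD r] ∧ |s n k - y| < ρ})
    {ν : ℕ → ℝ} (hsum : ∀ n, ∑ i, (d n i - s n i) ^ 2 ≤ ν n ^ 2)
    (hν : ν =o[atTop] fun n : ℕ => √n) {ε : ℝ} (hε : 0 < ε) :
    ∀ᶠ n in atTop, ∀ i, |s n i - d n i| < ε := by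
  obtain ⟨δ, hδ, hcard⟩ := hdense (ε / 2 / 2) (by positivity)
  filter_upwards [hcard, (hν.pow two_pos).bound (show 0 < (ε / 2) ^ 2 * δ / 2 by positivity)]
    with n hcard_n hν_n i
  by_contra! hdefect
  obtain ⟨y, hy, hwindow⟩ := exists_forall_le_abs_sub_of_monovaryOn (hmono n i)
    (show i ∈ _ from Nat.ModEq.refl _) (hs n i) (hd n i) (half_pos hε) (by linarith)
  have hlow := sq_mul_card_le_sum_sq (u := fun k => d n k - s n k) (half_pos hε).le
    (t := {k : Fin n | k ≡ i [MOD r] ∧ |s n k - y| < ε / 2 / 2}) fun k hk =>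
      hwindow k (Finset.mem_filter.mp hk).2.1 (Finset.mem_filter.mp hk).2.2
  have hupp := (hsum n).trans ((Real.le_norm_self _).trans hν_n)
  rw [Real.sq_sqrt n.cast_nonneg, Real.norm_natCast] at hupp
  have hn : (0 : ℝ) < n := by exact_mod_cast i.pos
  have hpos : 0 < (ε / 2) ^ 2 * δ * n := by positivity
  nlinarith [mul_le_mul_of_nonneg_left (hcard_n y hy i) (sq_nonneg (ε / 2))]

lemma conj_mul_conj_of_mem_unitaryGroup {ι : Type*} [Fintype ι] [DecidableEq ι]
    {V : Matrix ι ι ℝ} (hV : V ∈ unitaryGroup ι ℝ) (A B : Matrix ι ι ℝ) :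
    V * A * Vᴴ * (V * B * Vᴴ) = V * (A * B) * Vᴴ := by
  have hVV : Vᴴ * V = 1 := mem_unitaryGroup_iff'.mp hV
  calc V * A * Vᴴ * (V * B * Vᴴ) = V * A * (Vᴴ * V) * B * Vᴴ := by simp only [Matrix.mul_assoc]
    _ = V * (A * B) * Vᴴ := by rw [hVV, Matrix.mul_one, Matrix.mul_assoc V]

lemma exists_diagonalization_flipM_cosToeplitz (f : ℝ → ℝ) {n : ℕ} (s : Fin n → ℝ) :
    ∃ V ∈ unitaryGroup (Fin n) ℝ, ∃ d : Fin n → ℝ,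
      flipM n = V * diagonal (fun i : Fin n => (-1) ^ (i : ℕ)) * Vᴴ ∧
      cosToeplitz f n = V * diagonal d * Vᴴ ∧
      (∀ v, MonovaryOn d s {k | k ≡ v [MOD 2]}) ∧
      ∑ i, (d i - s i) ^ 2 ≤ ‖cosToeplitz f n - tauMatrix s‖ ^ 2 := by
  have hflip := flipM_eq_tauMatrix n
  have hcomm : Commute (tauMatrix fun i : Fin n => (-1) ^ (i : ℕ)) (cosToeplitz f n) :=
    hflip ▸ commute_flipM_cosToeplitz f n
  obtain ⟨V, hV, d, hY, hT, hmono, hsum⟩ := exists_simultaneous_diagonalization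
    (sineTransform_mem_unitaryGroup n) (isHermitian_cosToeplitz f n)
    (e := fun i => (-1) ^ (i : ℕ)) hcomm s
  refine ⟨V, hV, d, hflip.trans hY, hT, fun v => (hmono ((-1) ^ v)).subset fun k hk => ?_, hsum⟩
  rw [Set.mem_preimage, Set.mem_singleton_iff, neg_one_pow_eq_pow_mod_two, hk,
    ← neg_one_pow_eq_pow_mod_two]

lemma mem_Icc_sInf_sSup_image_of_even {f : ℝ → ℝ} (heven : ∀ t, f (-t) = f t) {a C : ℝ}
    (hf_bdd : ∀ t ∈ Set.Icc (-a) a, |f t| ≤ C) {t : ℝ} (ht : t ∈ Set.Icc (-a) a) :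
    f t ∈ Set.Icc (sInf (f '' Set.Icc 0 a)) (sSup (f '' Set.Icc 0 a)) := by
  have hbound : ∀ y ∈ f '' Set.Icc 0 a, |y| ≤ C := by
    rintro _ ⟨u, hu, rfl⟩
    exact hf_bdd u ⟨by linarith [hu.1, hu.2], hu.2⟩
  have hmem : f t ∈ f '' Set.Icc 0 a :=
    ⟨|t|, ⟨abs_nonneg t, abs_le.mpr ht⟩, by rcases abs_choice t with h | h <;> simp [h, heven]⟩
  exact ⟨csInf_le ⟨-C, fun y hy => (abs_le.mp (hbound y hy)).1⟩ hmem,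
    le_csSup ⟨C, fun y hy => (abs_le.mp (hbound y hy)).2⟩ hmem⟩

end EigenvalueMatching

/-- Let `f : [-π,π] → ℝ` be even, bounded, continuous a.e., with
essential range equal to `[inf_{[0,π]} f, sup_{[0,π]} f]`.  Then for every asymptotically
uniform grid `{x_{i,n}}` in `[0,π]` and every `n` there are a real unitary `V_n` and
orderings of the eigenvalues of `T_n(f)` and `H_n(f)` realizing the simultaneous
diagonalizations, the alternating sign relation, and
`max_i |f(x_{i,n}) - λ_i(T_n(f))| → 0`. -/
theorem stmt1
    (f : ℝ → ℝ)
    (hf_even : ∀ x, f (-x) = f x)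
    (hf_bdd : ∃ C : ℝ, ∀ x ∈ Set.Icc (-Real.pi) Real.pi, |f x| ≤ C)
    (hf_cae : ∀ᵐ x ∂(volume.restrict (Set.Icc (-Real.pi) Real.pi)),
      ContinuousWithinAt f (Set.Icc (-Real.pi) Real.pi) x)
    (hER : essRangeR f (Set.Icc (-Real.pi) Real.pi)
      = Set.Icc (sInf (f '' Set.Icc 0 Real.pi)) (sSup (f '' Set.Icc 0 Real.pi)))
    (x : (n : ℕ) → Fin n → ℝ)
    (hx_mem : ∀ n, ∀ i : Fin n, x n i ∈ Set.Icc 0 Real.pi)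
    (hx_au : ∀ ε > (0:ℝ), ∃ N : ℕ, ∀ n ≥ N, ∀ i : Fin n,
      |x n i - ((i : ℕ) + 1) * Real.pi / (n + 1)| < ε) :
    ∃ (V : (n : ℕ) → Matrix (Fin n) (Fin n) ℝ) (lamT lamH : (n : ℕ) → Fin n → ℝ),
      (∀ n : ℕ,
        V n * (V n)ᵀ = 1 ∧
        flipM n = V n * Matrix.diagonal (fun i : Fin n => ((-1 : ℝ)) ^ (i : ℕ)) * (V n)ᵀ ∧
        toeplitzR (fun t => (f t : ℂ)) n = V n * Matrix.diagonal (lamT n) * (V n)ᵀ ∧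
        flipM n * toeplitzR (fun t => (f t : ℂ)) n
          = V n * (Matrix.diagonal (fun i : Fin n => ((-1 : ℝ)) ^ (i : ℕ))
              * Matrix.diagonal (lamT n)) * (V n)ᵀ ∧
        (∀ i : Fin n, lamH n i = (-1 : ℝ) ^ (i : ℕ) * lamT n i)) ∧
      (∀ ε > (0:ℝ), ∃ N : ℕ, ∀ n ≥ N, ∀ i : Fin n, |f (x n i) - lamT n i| < ε) := by
  obtain ⟨C, hC⟩ := hf_bdd
  have hx : IsAsymptoticallyUniform 0 Real.pi x := by
    simpa [IsAsymptoticallyUniform] using hx_au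
  have hsub : Set.Icc 0 Real.pi ⊆ Set.Icc (-Real.pi) Real.pi :=
    Set.Icc_subset_Icc_left (neg_nonpos.mpr Real.pi_pos.le)
  have hf_int := intervalIntegrable_of_memLp_two (memLp_of_ae_continuousWithinAt hC hf_cae 2)
  have hf_mem {t : ℝ} := mem_Icc_sInf_sSup_image_of_even hf_even hC (t := t)
  choose V hV d hY hT hmono hsum using fun n =>
    exists_diagonalization_flipM_cosToeplitz f fun i : Fin n => f (x n i)
  refine ⟨V, d, fun n i => (-1) ^ (i : ℕ) * d n i, fun n => ?_,
    fun ε hε => eventually_atTop.mp ?_⟩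
  · rw [toeplitzR_ofReal hf_int, ← conjTranspose_eq_transpose_of_trivial]
    refine ⟨mem_unitaryGroup_iff.mp (hV n), hY n, hT n, ?_, fun _ => rfl⟩
    rw [← conj_mul_conj_of_mem_unitaryGroup (hV n), ← hY, ← hT]
  · exact eventually_forall_abs_sub_lt_of_monovaryOn_modEq
      (fun n i => hf_mem (hsub (hx_mem n i)))
      (fun n => mem_Icc_of_cosToeplitz_eq hf_int (fun _ => hf_mem) (hV n) (hT n)) hmono
      (fun ρ => hx.exists_forall_mul_le_card_abs_sub_lt
        ((ae_restrict_of_ae_restrict_of_subset hsub hf_cae).mono fun t ht => ht.mono hsub)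
        two_pos isCompact_Icc (hER ▸ essRangeR_subset_of_even hf_even _))
      hsum (isLittleO_norm_cosToeplitz_sub_tauMatrix hx hx_mem hf_even hC hf_cae) hε
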